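/- Assume (p_0, e) ≠ (2, 0), that there exists a maximal abelian subgroup A_R of H_R contained in F_q × F_q, that f is odd, and that p_0 ≢ 1 (mod 4). Then #{(x,y) ∈ F_{q^{2p_0}} × F_{q^{2p_0}} : y^p − y = x·R(x)} = q^{2p_0} + (p−1)·p^e·q^{p_0}. (Equivalently, the smooth compactification of the affine curve y^p − y = xR(x), which has genus p^e(p−1)/2 and a single point at infinity, is F_{q^{2p_0}}-maximal.) -/

import Mathlib

open Finset Polynomial

/-- The additive polynomial `R(x) = ∑_{i=0}^e a_i x^{p^i}`, evaluated in any commutative ring. -/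
def Rgen {A : Type*} [CommRing A] (p e : ℕ) (a : ℕ → A) (x : A) : A :=
  ∑ i ∈ Finset.range (e + 1), a i * x ^ p ^ i

/-- `E_R(x) = R(x)^{p^e} + ∑_{i=0}^e (a_i x)^{p^{e-i}}`. -/
def Egen {A : Type*} [CommRing A] (p e : ℕ) (a : ℕ → A) (x : A) : A :=
  Rgen p e a x ^ p ^ e + ∑ i ∈ Finset.range (e + 1), (a i * x) ^ p ^ (e - i)

/-- `f_R(x,y) = -∑_{i=0}^{e-1} ( ∑_{j=0}^{e-i-1} (a_i x^{p^i} y)^{p^j} + (x R(y))^{p^i} )`. -/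
def fgen {A : Type*} [CommRing A] (p e : ℕ) (a : ℕ → A) (x y : A) : A :=
  -∑ i ∈ Finset.range e,
    ((∑ j ∈ Finset.range (e - i), (a i * x ^ p ^ i * y) ^ p ^ j) + (x * Rgen p e a y) ^ p ^ i)

/-- The set `H_R = {(a,b) : E_R(a) = 0, b^p - b = a R(a)}`. -/
def Hset {K : Type*} [CommRing K] (p e : ℕ) (a : ℕ → K) : Set (K × K) :=
  {h | Egen p e a h.1 = 0 ∧ h.2 ^ p - h.2 = h.1 * Rgen p e a h.1}

/-- The group law `(a,b)·(a',b') = (a+a', b+b'+f_R(a,a'))` on `H_R`. -/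
def Hmul {K : Type*} [CommRing K] (p e : ℕ) (a : ℕ → K) (h h' : K × K) : K × K :=
  (h.1 + h'.1, h.2 + h'.2 + fgen p e a h.1 h'.1)

/-!
For each `x` the number of `y` with `y ^ p - y = x * R x` is a sum of values of the additive
characters of `F_p` at `Tr (x * R x)`, so every nontrivial additive character has to contribute
`p ^ e * q ^ p₀` in total.

The polynomial identity `f ^ p - f = x * R y + y * R x - x ^ p ^ e * E y` for `f = f_R (x, y)`
makes the commutator form `ω (x, y) = f_R (x, y) - f_R (y, x)` a nondegenerate alternating form on
`V_R` with values in `F_p`. A maximal abelian subgroup of `H_R` is the preimage of a Lagrangian `A`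
of this form.

If `p₀` is odd, let `P` be the monic additive polynomial with kernel `A`. Since `E` vanishes on `A`,
it factors through `P`, and `x * R x` is equivalent to `(g₀ / 2) * P x ^ 2` modulo elements
`y ^ p - y`. The character sum is therefore `p ^ e` times a quadratic Gauss sum over the field with
`Q ^ 2` elements, where `Q = q ^ p₀` is `3` modulo `4`, so the Gauss sum is `Q`.

If `p₀ = 2`, averaging over translations by `F_{q ^ 2}` concentrates the sum on the `x` with
`x ^ q ^ 2 - x ∈ V_R`. In terms of `v = x ^ q ^ 2 - x` the trace of `x * R x` equals
`f_R (v, v) + f_R (N v, N v)`, where `N v = v ^ q - v`. Here `v ↦ f_R (v, v)` is a quadratic form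
on `V_R` of minus type, with character sum `-p ^ e`, and `f_R (N v, N v) = ω (v, N v)`. Adding it
flips the sign because the order of `ker N` is not a square, which is where `f` odd enters.
-/

/-- `p` is a positive power of the prime characteristic of the ring `A`; this is what makes
`x ↦ x ^ p` a ring endomorphism of `A`. -/
class IsCharPow (A : Type*) [CommRing A] (p : ℕ) : Prop where
  exists_prime_pow : ∃ p₀ n : ℕ, p₀.Prime ∧ CharP A p₀ ∧ 0 < n ∧ p = p₀ ^ n

namespace IsCharPow

variable {A : Type*} [CommRing A] (p : ℕ) [hA : IsCharPow A p]

include hA in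
variable (A) in
lemma one_lt : 1 < p := by
  obtain ⟨p₀, n, hp₀, -, hn, rfl⟩ := hA
  exact Nat.one_lt_pow hn.ne' hp₀.one_lt

variable (A) in
lemma cast_eq_zero : (p : A) = 0 := by
  obtain ⟨p₀, n, -, _, hn, rfl⟩ := hA
  rw [Nat.cast_pow, CharP.cast_eq_zero, zero_pow hn.ne']

instance : IsCharPow A[X] p := by
  obtain ⟨p₀, n, hp₀, _, hn, rfl⟩ := hA
  exact ⟨p₀, n, hp₀, inferInstance, hn, rfl⟩

lemma of_algebra (F L : Type*) [Field F] [Field L] [Algebra F L] [hF : IsCharPow F p] :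
    IsCharPow L p := by
  obtain ⟨p₀, n, hp₀, _, hn, rfl⟩ := hF
  exact ⟨p₀, n, hp₀, charP_of_injective_algebraMap (algebraMap F L).injective p₀, hn, rfl⟩

end IsCharPow

/-- The iterated Frobenius endomorphism `x ↦ x ^ p ^ i`. -/
def powHom (A : Type*) [CommRing A] (p i : ℕ) [hA : IsCharPow A p] : A →+* A where
  toFun x := x ^ p ^ i
  map_one' := one_pow _
  map_mul' x y := mul_pow x y _
  map_zero' := zero_pow (pow_pos (zero_lt_one.trans (IsCharPow.one_lt A p)) i).ne'
  map_add' x y := by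
    obtain ⟨p₀, n, hp₀, _, -, rfl⟩ := hA
    have := Fact.mk hp₀
    rw [← pow_mul, add_pow_char_pow]

@[simp] lemma powHom_apply {A : Type*} [CommRing A] (p i : ℕ) [IsCharPow A p] (x : A) :
    powHom A p i x = x ^ p ^ i := rfl

section PowPow

variable {A : Type*} [CommRing A] (p : ℕ) [IsCharPow A p]

lemma add_pow_pow (i : ℕ) (x y : A) : (x + y) ^ p ^ i = x ^ p ^ i + y ^ p ^ i :=
  map_add (powHom A p i) x y

lemma neg_pow_pow (i : ℕ) (x : A) : (-x) ^ p ^ i = -x ^ p ^ i := map_neg (powHom A p i) x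

lemma sub_pow_pow (i : ℕ) (x y : A) : (x - y) ^ p ^ i = x ^ p ^ i - y ^ p ^ i :=
  map_sub (powHom A p i) x y

lemma add_pow_self (x y : A) : (x + y) ^ p = x ^ p + y ^ p := by
  simpa only [pow_one] using add_pow_pow p 1 x y

lemma neg_pow_self (x : A) : (-x) ^ p = -x ^ p := by
  simpa only [pow_one] using neg_pow_pow p 1 x

lemma sub_pow_self (x y : A) : (x - y) ^ p = x ^ p - y ^ p := by
  simpa only [pow_one] using sub_pow_pow p 1 x y

lemma sum_pow_pow (i : ℕ) {ι : Type*} (t : Finset ι) (g : ι → A) :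
    (∑ k ∈ t, g k) ^ p ^ i = ∑ k ∈ t, g k ^ p ^ i := map_sum (powHom A p i) g t

end PowPow

section FixedPoints

variable {M : Type*} [Monoid M] {p i : ℕ}

lemma pow_pow_mul_eq_self {x : M} (hx : x ^ p ^ i = x) (m : ℕ) : x ^ p ^ (i * m) = x := by
  induction m with
  | zero => simp
  | succ m ih => rw [Nat.mul_succ, pow_add, pow_mul, ih, hx]

lemma pow_pow_eq_self {x : M} (hx : x ^ p = x) (m : ℕ) : x ^ p ^ m = x := by
  simpa using pow_pow_mul_eq_self (i := 1) (by simpa using hx) m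

lemma pow_pow_add (x : M) (i j : ℕ) : x ^ p ^ (i + j) = (x ^ p ^ i) ^ p ^ j := by
  rw [pow_add, pow_mul]

end FixedPoints

/-- The subfield of `A` fixed by `x ↦ x ^ p ^ i`; it is the finite field with `p ^ i` elements
when `A` is algebraically closed. -/
def fixedField (A : Type*) [Field A] (p i : ℕ) [IsCharPow A p] : Subfield A :=
  (powHom A p i).eqLocusField (RingHom.id A)

@[simp] lemma mem_fixedField {A : Type*} [Field A] {p i : ℕ} [IsCharPow A p] {x : A} :
    x ∈ fixedField A p i ↔ x ^ p ^ i = x := Iff.rfl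

lemma mem_fixedField_one {A : Type*} [Field A] {p : ℕ} [IsCharPow A p] {x : A} :
    x ∈ fixedField A p 1 ↔ x ^ p = x := by rw [mem_fixedField, pow_one]

section AdditivePolynomials

variable {A : Type*} [CommRing A] {p : ℕ} [IsCharPow A p] (e : ℕ) (a : ℕ → A)

lemma Rgen_add (x y : A) : Rgen p e a (x + y) = Rgen p e a x + Rgen p e a y := by
  simp only [Rgen, add_pow_pow p, mul_add, sum_add_distrib]

lemma Egen_add (x y : A) : Egen p e a (x + y) = Egen p e a x + Egen p e a y := by
  simp only [Egen, Rgen_add, add_pow_pow p, mul_add, sum_add_distrib]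
  ring

variable (p) in
/-- `E_R` as an additive endomorphism; its kernel is `V_R`. -/
def EgenHom : A →+ A := AddMonoidHom.mk' (Egen p e a) (Egen_add e a)

@[simp] lemma EgenHom_apply (x : A) : EgenHom p e a x = Egen p e a x := rfl

lemma Egen_sub (x y : A) : Egen p e a (x - y) = Egen p e a x - Egen p e a y :=
  map_sub (EgenHom p e a) x y

lemma fgen_add_left (x x' y : A) : fgen p e a (x + x') y = fgen p e a x y + fgen p e a x' y := by
  simp only [fgen, add_pow_pow p, mul_add, add_mul, sum_add_distrib]
  ring

lemma fgen_add_right (x y y' : A) : fgen p e a x (y + y') = fgen p e a x y + fgen p e a x y' := by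
  simp only [fgen, Rgen_add, add_pow_pow p, mul_add, sum_add_distrib]
  ring

variable (p) in
/-- `f_R` as a biadditive map. -/
def fgenHom : A →+ A →+ A :=
  AddMonoidHom.mk' (fun x ↦ AddMonoidHom.mk' (fgen p e a x) (fgen_add_right e a x))
    fun x x' ↦ AddMonoidHom.ext (fgen_add_left e a x x')

@[simp] lemma fgenHom_apply (x y : A) : fgenHom p e a x y = fgen p e a x y := rfl

variable (p) in
/-- The commutator form `ω(x, y) = f_R(x, y) - f_R(y, x)` of the group `H_R`. -/
def omegaHom : A →+ A →+ A := fgenHom p e a - (fgenHom p e a).flip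

@[simp] lemma omegaHom_apply (x y : A) :
    omegaHom p e a x y = fgen p e a x y - fgen p e a y x := rfl

end AdditivePolynomials

section FixedScalars

variable {A : Type*} [CommRing A] {p e : ℕ} {a : ℕ → A} {c : A}

lemma Rgen_smul (hc : c ^ p = c) (x : A) : Rgen p e a (c * x) = c * Rgen p e a x := by
  simp only [Rgen, mul_sum, mul_pow, pow_pow_eq_self hc]
  exact sum_congr rfl fun i _ ↦ by ring

lemma Egen_smul (hc : c ^ p = c) (x : A) : Egen p e a (c * x) = c * Egen p e a x := by
  simp only [Egen, Rgen_smul hc, mul_sum, mul_pow, pow_pow_eq_self hc, mul_add]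
  congr 1
  exact sum_congr rfl fun i _ ↦ by ring

lemma fgen_smul_left (hc : c ^ p = c) (x y : A) : fgen p e a (c * x) y = c * fgen p e a x y := by
  simp only [fgen, mul_neg, mul_sum, mul_pow, pow_pow_eq_self hc, mul_add]
  congr! 3 with i
  · exact sum_congr rfl fun j _ ↦ by ring
  · ring

lemma fgen_smul_right (hc : c ^ p = c) (x y : A) : fgen p e a x (c * y) = c * fgen p e a x y := by
  simp only [fgen, Rgen_smul hc, mul_neg, mul_sum, mul_pow, pow_pow_eq_self hc, mul_add]
  congr! 3 with i
  · exact sum_congr rfl fun j _ ↦ by ring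
  · ring

end FixedScalars

section BaseChange

variable {A B : Type*} [CommRing A] [CommRing B] (g : A →+* B) (p e : ℕ) (a : ℕ → A)

lemma map_Rgen (x : A) : g (Rgen p e a x) = Rgen p e (fun i ↦ g (a i)) (g x) := by
  simp [Rgen, map_sum]

lemma map_Egen (x : A) : g (Egen p e a x) = Egen p e (fun i ↦ g (a i)) (g x) := by
  simp [Egen, map_Rgen, map_sum]

lemma map_fgen (x y : A) : g (fgen p e a x y) = fgen p e (fun i ↦ g (a i)) (g x) (g y) := by
  simp [fgen, map_Rgen, map_sum]

end BaseChange

section FrobeniusEquivariance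

variable {A : Type*} [CommRing A] {p e s : ℕ} [IsCharPow A p] {a : ℕ → A}

lemma Rgen_pow (ha : ∀ i ≤ e, a i ^ p ^ s = a i) (x : A) :
    Rgen p e a x ^ p ^ s = Rgen p e a (x ^ p ^ s) := by
  rw [← powHom_apply p s x, ← powHom_apply, map_Rgen]
  exact sum_congr rfl fun i hi ↦ congrArg (· * _) (ha i (Nat.lt_succ_iff.1 (mem_range.1 hi)))

lemma Egen_pow (ha : ∀ i, a i ^ p ^ s = a i) (x : A) :
    Egen p e a x ^ p ^ s = Egen p e a (x ^ p ^ s) := by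
  simpa [ha] using map_Egen (powHom A p s) p e a x

lemma fgen_pow (ha : ∀ i, a i ^ p ^ s = a i) (x y : A) :
    fgen p e a x y ^ p ^ s = fgen p e a (x ^ p ^ s) (y ^ p ^ s) := by
  simpa [ha] using map_fgen (powHom A p s) p e a x y

lemma omegaHom_pow (ha : ∀ i, a i ^ p ^ s = a i) (x y : A) :
    omegaHom p e a x y ^ p ^ s = omegaHom p e a (x ^ p ^ s) (y ^ p ^ s) := by
  rw [omegaHom_apply, sub_pow_pow, fgen_pow ha, fgen_pow ha, omegaHom_apply]

end FrobeniusEquivariance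

section KeyIdentity

variable {A : Type*} [CommRing A] {p : ℕ} [IsCharPow A p]

lemma sum_range_pow_telescope (m : ℕ) (z : A) :
    (∑ j ∈ range m, z ^ p ^ j) ^ p - ∑ j ∈ range m, z ^ p ^ j = z ^ p ^ m - z := by
  have hsum := sum_pow_pow p 1 (range m) fun j ↦ z ^ p ^ j
  simp only [pow_one, ← pow_mul, ← pow_succ] at hsum
  rw [hsum, ← sum_sub_distrib, sum_range_sub (fun j ↦ z ^ p ^ j), pow_zero, pow_one]

variable (e : ℕ) (a : ℕ → A)

lemma fgen_double_sum_telescope (x y : A) :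
    (∑ i ∈ range e, ∑ j ∈ range (e - i), (a i * x ^ p ^ i * y) ^ p ^ j) ^ p
      - ∑ i ∈ range e, ∑ j ∈ range (e - i), (a i * x ^ p ^ i * y) ^ p ^ j =
      ∑ i ∈ range e, ((a i * y) ^ p ^ (e - i) * x ^ p ^ e - y * (a i * x ^ p ^ i)) := by
  have hsum := sum_pow_pow p 1 (range e) fun i ↦ ∑ j ∈ range (e - i), (a i * x ^ p ^ i * y) ^ p ^ j
  rw [pow_one] at hsum
  rw [hsum, ← sum_sub_distrib]
  refine sum_congr rfl fun i hi ↦ ?_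
  have hie : i + (e - i) = e := Nat.add_sub_cancel' (mem_range.1 hi).le
  have hx : x ^ p ^ e = (x ^ p ^ i) ^ p ^ (e - i) := by rw [← pow_pow_add, hie]
  rw [sum_range_pow_telescope, hx]
  ring

theorem fgen_pow_sub_self (x y : A) : fgen p e a x y ^ p - fgen p e a x y =
    x * Rgen p e a y + y * Rgen p e a x - x ^ p ^ e * Egen p e a y := by
  set D := ∑ i ∈ range e, ∑ j ∈ range (e - i), (a i * x ^ p ^ i * y) ^ p ^ j with hD
  set T := ∑ i ∈ range e, (x * Rgen p e a y) ^ p ^ i with hT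
  have hf : fgen p e a x y = -D - T := by
    rw [fgen, sum_add_distrib, neg_add']
  have hDp := fgen_double_sum_telescope (p := p) e a x y
  have hTp := sum_range_pow_telescope (p := p) e (x * Rgen p e a y)
  rw [sum_sub_distrib, ← sum_mul, ← mul_sum, ← hD] at hDp
  rw [mul_pow, ← hT] at hTp
  have hR : Rgen p e a x = ∑ i ∈ range e, a i * x ^ p ^ i + a e * x ^ p ^ e := sum_range_succ ..
  have hE : Egen p e a y =
      Rgen p e a y ^ p ^ e + (∑ i ∈ range e, (a i * y) ^ p ^ (e - i) + a e * y) := by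
    rw [Egen, sum_range_succ, Nat.sub_self, pow_zero, pow_one]
  rw [hf, sub_pow_self, neg_pow_self, hR, hE]
  linear_combination -hDp - hTp

end KeyIdentity

section CommutatorIdentity

variable {A : Type*} [CommRing A] {p : ℕ} [IsCharPow A p] (e : ℕ) (a : ℕ → A)

lemma omegaHom_pow_sub_self (x y : A) : omegaHom p e a x y ^ p - omegaHom p e a x y =
    y ^ p ^ e * Egen p e a x - x ^ p ^ e * Egen p e a y := by
  rw [omegaHom_apply, sub_pow_self]
  linear_combination fgen_pow_sub_self (p := p) e a x y - fgen_pow_sub_self (p := p) e a y x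

lemma fgen_self_pow_sub_self [CharP A 2] (x : A) :
    fgen p e a x x ^ p - fgen p e a x x = x ^ p ^ e * Egen p e a x := by
  rw [fgen_pow_sub_self, CharTwo.add_self_eq_zero, zero_sub, CharTwo.neg_eq]

end CommutatorIdentity

section AlgClosed

variable {K : Type*} [Field K] [IsAlgClosed K] {m : ℕ}

lemma exists_pow_sub_self_eq (hm : 1 < m) (t : K) : ∃ b : K, b ^ m - b = t := by
  have hdeg : (X ^ m - X - C t : K[X]).natDegree = m := by
    rw [natDegree_sub_C, FiniteField.X_pow_card_sub_X_natDegree_eq K hm]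
  obtain ⟨b, hb⟩ := IsAlgClosed.exists_root (X ^ m - X - C t)
    (natDegree_pos_iff_degree_pos.1 (hdeg ▸ zero_lt_one.trans hm)).ne'
  exact ⟨b, by simpa [sub_eq_zero] using hb⟩

end AlgClosed

section Polynomials

variable {K : Type*} [Field K] {p e : ℕ} {a : ℕ → K}

lemma natDegree_pow_sub_self (hp : 1 < p) (W : K[X]) :
    (W ^ p - W).natDegree = p * W.natDegree := by
  rcases Nat.eq_zero_or_pos W.natDegree with h0 | h0
  · obtain ⟨c, rfl⟩ := natDegree_eq_zero.1 h0
    rw [← C_pow, ← C_sub, natDegree_C, natDegree_C, mul_zero]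
  · have hlt : W.natDegree < (W ^ p).natDegree := by
      rw [natDegree_pow]
      exact lt_mul_of_one_lt_left h0 hp
    rw [natDegree_sub_eq_left_of_natDegree_lt hlt, natDegree_pow]

lemma separable_of_derivative_eq_C {g : K[X]} {d : K} (hd : d ≠ 0) (hg : derivative g = C d) :
    g.Separable := by
  rw [Polynomial.Separable, hg]
  exact isCoprime_one_right.of_isCoprime_of_dvd_right
    (isUnit_iff_dvd_one.1 (isUnit_C.2 hd.isUnit))

lemma ncard_rootSet_of_separable [IsAlgClosed K] {g : K[X]} (hg : g.Separable) :
    (g.rootSet K).ncard = g.natDegree := by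
  rw [← Nat.card_coe_set_eq, Nat.card_eq_fintype_card]
  exact card_rootSet_eq_natDegree hg (IsAlgClosed.splits _)

lemma natDegree_Rgen_X (hp : 1 < p) (hae : a e ≠ 0) :
    (Rgen p e (fun i ↦ C (a i)) X).natDegree = p ^ e := by
  have htop : (C (a e) * X ^ p ^ e : K[X]).natDegree = p ^ e := natDegree_C_mul_X_pow _ _ hae
  rw [Rgen, sum_range_succ]
  rcases Nat.eq_zero_or_pos e with rfl | he
  · simpa using htop
  rw [natDegree_add_eq_right_of_natDegree_lt, htop]
  rw [htop]
  refine (natDegree_sum_le_of_forall_le (n := p ^ (e - 1)) _ _ fun i hi ↦ ?_).trans_lt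
    (Nat.pow_lt_pow_right hp (by lia))
  exact (natDegree_C_mul_X_pow_le _ _).trans
    (Nat.pow_le_pow_right (by lia) (by have := mem_range.1 hi; lia))

/-- The polynomial `E_R ∈ K[X]`. -/
noncomputable def Epoly (p e : ℕ) (a : ℕ → K) : K[X] := Egen p e (fun i ↦ C (a i)) X

@[simp] lemma eval_Epoly (x : K) : (Epoly p e a).eval x = Egen p e a x := by
  simpa [Epoly] using map_Egen (evalRingHom x) p e (fun i ↦ C (a i)) X

lemma Epoly_zero : Epoly p 0 a = C (2 * a 0) * X := by
  simp [Epoly, Egen, Rgen, two_mul, add_mul]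

lemma natDegree_Epoly (hp : 1 < p) (hae : a e ≠ 0) (h2 : e = 0 → (2 : K) ≠ 0) :
    (Epoly p e a).natDegree = p ^ (2 * e) := by
  rcases Nat.eq_zero_or_pos e with rfl | he
  · rw [Epoly_zero, natDegree_C_mul_X _ (mul_ne_zero (h2 rfl) hae), mul_zero, pow_zero]
  have htop : (Rgen p e (fun i ↦ C (a i)) (X : K[X]) ^ p ^ e).natDegree = p ^ (2 * e) := by
    rw [natDegree_pow, natDegree_Rgen_X hp hae, ← pow_add, two_mul]
  rw [Epoly, Egen, natDegree_add_eq_left_of_natDegree_lt, htop]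
  rw [htop]
  refine (natDegree_sum_le_of_forall_le (n := p ^ e) _ _ fun i _ ↦ ?_).trans_lt
    (Nat.pow_lt_pow_right hp (by lia))
  calc ((C (a i) * X) ^ p ^ (e - i) : K[X]).natDegree
      ≤ p ^ (e - i) * (C (a i) * X : K[X]).natDegree := natDegree_pow_le
    _ ≤ p ^ (e - i) * 1 :=
          Nat.mul_le_mul_left _ ((natDegree_C_mul_le _ _).trans natDegree_X_le)
    _ ≤ p ^ e := by rw [mul_one]; exact Nat.pow_le_pow_right (by lia) (by lia)

variable [IsCharPow K p]

lemma derivative_pow_pow (g : K[X]) {i : ℕ} (hi : 0 < i) : derivative (g ^ p ^ i) = 0 := by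
  have : ((p ^ i : ℕ) : K) = 0 := by
    rw [Nat.cast_pow, IsCharPow.cast_eq_zero, zero_pow hi.ne']
  rw [derivative_pow, this, C_0, zero_mul, zero_mul]

lemma card_fixedField [IsAlgClosed K] {i : ℕ} (hi : 0 < i) :
    Nat.card (fixedField K p i) = p ^ i := by
  have hdeg : (X ^ p ^ i - X : K[X]).natDegree = p ^ i :=
    FiniteField.X_pow_card_sub_X_natDegree_eq K (Nat.one_lt_pow hi.ne' (IsCharPow.one_lt K p))
  have hsep : (X ^ p ^ i - X : K[X]).Separable := by
    refine separable_of_derivative_eq_C (neg_ne_zero.2 one_ne_zero) ?_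
    rw [derivative_sub, derivative_pow_pow X hi, derivative_X, zero_sub, C_neg, C_1]
  have hset : (X ^ p ^ i - X : K[X]).rootSet K = fixedField K p i := by
    ext x
    simp [mem_rootSet_of_ne hsep.ne_zero, sub_eq_zero]
  rw [← hdeg, ← ncard_rootSet_of_separable hsep, hset]
  rfl

lemma finite_fixedField [IsAlgClosed K] {i : ℕ} (hi : 0 < i) : Finite (fixedField K p i) :=
  Nat.finite_of_card_ne_zero <| by
    rw [card_fixedField hi]
    exact (pow_pos (zero_lt_one.trans (IsCharPow.one_lt K p)) i).ne'

instance [IsAlgClosed K] : Finite (fixedField K p 1) := finite_fixedField one_pos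

lemma mem_range_algebraMap_iff [IsAlgClosed K] {L : Type*} [Field L] [Finite L] [Algebra L K]
    {m : ℕ} (hL : Nat.card L = p ^ m) {x : K} :
    x ∈ (algebraMap L K).fieldRange ↔ x ^ p ^ m = x := by
  have := Fintype.ofFinite L
  rw [Nat.card_eq_fintype_card] at hL
  have hm : 0 < m := Nat.pos_of_ne_zero fun h ↦
    Fintype.one_lt_card.ne' (hL.trans (by rw [h, pow_zero]))
  have hle : (algebraMap L K).fieldRange ≤ fixedField K p m := by
    rintro _ ⟨y, rfl⟩
    rw [mem_fixedField, ← map_pow, ← hL, FiniteField.pow_card]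
  have hfin := finite_fixedField (K := K) (p := p) hm
  have hcard : (fixedField K p m : Set K).ncard ≤ ((algebraMap L K).fieldRange : Set K).ncard := by
    change Nat.card (fixedField K p m) ≤ Nat.card (algebraMap L K).fieldRange
    rw [card_fixedField hm, ← hL, ← Nat.card_eq_fintype_card,
      Nat.card_congr (algebraMap L K).rangeRestrictFieldEquiv.toEquiv]
  rw [SetLike.ext'_iff.2 (Set.eq_of_subset_of_ncard_le hle hcard hfin), mem_fixedField]

lemma derivative_Epoly (he : 0 < e) : derivative (Epoly p e a) = C (a e) := by
  rw [Epoly, Egen, derivative_add, derivative_pow_pow _ he, sum_range_succ, derivative_add,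
    derivative_sum, sum_eq_zero fun i hi ↦ derivative_pow_pow _ (by have := mem_range.1 hi; lia)]
  simp

lemma exists_derivative_Epoly_eq_C (hae : a e ≠ 0) (h2 : e = 0 → (2 : K) ≠ 0) :
    ∃ r ≠ 0, derivative (Epoly p e a) = C r := by
  rcases Nat.eq_zero_or_pos e with rfl | he
  · exact ⟨2 * a 0, mul_ne_zero (h2 rfl) hae, by rw [Epoly_zero, derivative_C_mul_X]⟩
  · exact ⟨a e, hae, derivative_Epoly he⟩

lemma separable_Epoly (hae : a e ≠ 0) (h2 : e = 0 → (2 : K) ≠ 0) : (Epoly p e a).Separable :=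
  let ⟨_, hr, hder⟩ := exists_derivative_Epoly_eq_C hae h2
  separable_of_derivative_eq_C hr hder

lemma rootSet_Epoly (hae : a e ≠ 0) (h2 : e = 0 → (2 : K) ≠ 0) :
    (Epoly p e a).rootSet K = (EgenHom p e a).ker := by
  ext x
  simp [mem_rootSet_of_ne (separable_Epoly (p := p) hae h2).ne_zero]

lemma finite_ker_EgenHom (hae : a e ≠ 0) (h2 : e = 0 → (2 : K) ≠ 0) :
    Finite (EgenHom p e a).ker := by
  change Finite ((EgenHom p e a).ker : Set K)
  rw [← rootSet_Epoly hae h2]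
  infer_instance

variable [IsAlgClosed K]

lemma card_ker_EgenHom (hae : a e ≠ 0) (h2 : e = 0 → (2 : K) ≠ 0) :
    Nat.card (EgenHom p e a).ker = p ^ (2 * e) := by
  rw [← natDegree_Epoly (IsCharPow.one_lt K p) hae h2,
    ← ncard_rootSet_of_separable (separable_Epoly hae h2), rootSet_Epoly hae h2]
  rfl

/-- For fixed `v ∈ V_R` the polynomial `ω(X, v)` has degree `p ^ (2 * e - 1)`, too small to vanish
on the `p ^ (2 * e)` elements of `V_R`. -/
lemma eq_zero_of_omegaHom_eq_zero (hae : a e ≠ 0) (h2 : e = 0 → (2 : K) ≠ 0) {v : K}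
    (hv : v ∈ (EgenHom p e a).ker) (h : ∀ x ∈ (EgenHom p e a).ker, omegaHom p e a x v = 0) :
    v = 0 := by
  by_contra hv0
  have hp := IsCharPow.one_lt K p
  set W : K[X] := omegaHom p e (fun i ↦ C (a i)) X (C v) with hW
  have hEv : Egen p e (fun i ↦ C (a i)) (C v) = 0 := by
    rw [← map_Egen C, ← EgenHom_apply, AddMonoidHom.mem_ker.1 hv, C_0]
  have hWE : W ^ p - W = C (v ^ p ^ e) * Epoly p e a := by
    rw [hW, omegaHom_pow_sub_self, hEv, mul_zero, sub_zero, C_pow, Epoly]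
  have hdeg : p * W.natDegree = p ^ (2 * e) := by
    rw [← natDegree_pow_sub_self hp, hWE, natDegree_C_mul (pow_ne_zero _ hv0),
      natDegree_Epoly hp hae h2]
  have hW0 : 0 < W.natDegree := by
    refine Nat.pos_of_ne_zero fun h0 ↦ ?_
    rw [h0, mul_zero] at hdeg
    exact (pow_pos (zero_lt_one.trans hp) _).ne hdeg
  have heval (x : K) : W.eval x = omegaHom p e a x v := by
    rw [hW, omegaHom_apply, omegaHom_apply, ← coe_evalRingHom, map_sub, map_fgen, map_fgen]
    simp
  have hsub : ((EgenHom p e a).ker : Set K) ⊆ W.rootSet K := fun x hx ↦ by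
    rw [mem_rootSet_of_ne (ne_zero_of_natDegree_gt hW0), coe_aeval_eq_eval, heval, h x hx]
  have hle : p ^ (2 * e) ≤ W.natDegree := by
    rw [← card_ker_EgenHom hae h2]
    exact (Set.ncard_le_ncard hsub (rootSet_finite W K)).trans (ncard_rootSet_le W K)
  exact (lt_mul_of_one_lt_left hW0 hp).not_ge (hdeg.trans_le hle)

end Polynomials

section DiagonalCharTwo

variable {K : Type*} [Field K] {p e : ℕ} {a : ℕ → K}

/-- The polynomial `f_R(X, X) ∈ K[X]`. -/
noncomputable def diagPoly (p e : ℕ) (a : ℕ → K) : K[X] := fgen p e (fun i ↦ C (a i)) X X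

@[simp] lemma eval_diagPoly (x : K) : (diagPoly p e a).eval x = fgen p e a x x := by
  simpa [diagPoly] using map_fgen (evalRingHom x) p e (fun i ↦ C (a i)) X X

variable [IsCharPow K p] [CharP K 2]

lemma diagPoly_pow_sub_self : diagPoly p e a ^ p - diagPoly p e a = X ^ p ^ e * Epoly p e a :=
  fgen_self_pow_sub_self e (fun i ↦ C (a i)) X

lemma mul_natDegree_diagPoly (hae : a e ≠ 0) (he : 0 < e) :
    p * (diagPoly p e a).natDegree = p ^ (2 * e) + p ^ e := by
  have hE := natDegree_Epoly (IsCharPow.one_lt K p) hae fun h ↦ absurd h he.ne'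
  have hE0 : Epoly p e a ≠ 0 := (separable_Epoly hae fun h ↦ absurd h he.ne').ne_zero
  rw [← natDegree_pow_sub_self (IsCharPow.one_lt K p), diagPoly_pow_sub_self,
    natDegree_mul (pow_ne_zero _ X_ne_zero) hE0, hE, natDegree_X_pow, add_comm]

lemma derivative_diagPoly (he : 0 < e) :
    derivative (diagPoly p e a) = X ^ p ^ e * C (a e) := by
  have h := congrArg derivative (diagPoly_pow_sub_self (p := p) (e := e) (a := a))
  have hpow := derivative_pow_pow (p := p) (diagPoly p e a) one_pos
  rw [pow_one] at hpow
  rwa [derivative_sub, derivative_mul, hpow, derivative_pow_pow X he, derivative_Epoly he,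
    zero_sub, CharTwo.neg_eq, zero_mul, zero_add] at h

lemma separable_diagPoly_sub_C (hae : a e ≠ 0) (he : 0 < e) {c : K} (hc : c ≠ 0) :
    (diagPoly p e a - C c).Separable := by
  rw [Polynomial.Separable, derivative_sub, derivative_C, sub_zero, derivative_diagPoly he]
  refine IsCoprime.mul_right (IsCoprime.pow_right ?_)
    (isCoprime_one_right.of_isCoprime_of_dvd_right (isUnit_iff_dvd_one.1 (isUnit_C.2 hae.isUnit)))
  obtain ⟨g, hg⟩ : X ∣ diagPoly p e a := by
    rw [X_dvd_iff, coeff_zero_eq_eval_zero, eval_diagPoly, ← fgenHom_apply, map_zero]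
  have hcc : C c⁻¹ * C c = (1 : K[X]) := by rw [← C_mul, inv_mul_cancel₀ hc, C_1]
  refine ⟨-C c⁻¹, C c⁻¹ * g, ?_⟩
  rw [hg]
  linear_combination hcc

lemma rootSet_diagPoly_sub_C (hae : a e ≠ 0) (he : 0 < e) {c : K} (hc : c ^ p = c) (hc0 : c ≠ 0) :
    (diagPoly p e a - C c).rootSet K = {x | Egen p e a x = 0 ∧ fgen p e a x x = c} := by
  ext x
  rw [mem_rootSet_of_ne (separable_diagPoly_sub_C hae he hc0).ne_zero]
  simp only [coe_aeval_eq_eval, eval_sub, eval_C, eval_diagPoly, sub_eq_zero, Set.mem_ofPred_eq]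
  refine ⟨fun h ↦ ⟨?_, h⟩, And.right⟩
  have hxE := fgen_self_pow_sub_self e a x (p := p)
  rw [h, hc, sub_self] at hxE
  refine (mul_eq_zero.1 hxE.symm).resolve_left fun hx ↦ hc0 ?_
  rw [← h, eq_zero_of_pow_eq_zero hx, ← fgenHom_apply, map_zero]

theorem mul_ncard_fgen_self_eq [IsAlgClosed K] (hae : a e ≠ 0) (he : 0 < e) {c : K}
    (hc : c ^ p = c) (hc0 : c ≠ 0) :
    p * {x | Egen p e a x = 0 ∧ fgen p e a x x = c}.ncard = p ^ (2 * e) + p ^ e := by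
  rw [← rootSet_diagPoly_sub_C hae he hc hc0,
    ncard_rootSet_of_separable (separable_diagPoly_sub_C hae he hc0), natDegree_sub_C,
    mul_natDegree_diagPoly hae he]

end DiagonalCharTwo

lemma exists_addChar_ne_zero (G : Type*) [AddCommGroup G] [Finite G] [Nontrivial G] :
    ∃ ψ : AddChar G ℂ, ψ ≠ 0 := by
  obtain ⟨x, hx⟩ := exists_ne (0 : G)
  obtain ⟨ψ, hψ⟩ := AddChar.exists_apply_ne_zero.2 hx
  exact ⟨ψ, fun h ↦ hψ (by rw [h, AddChar.zero_apply])⟩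

/-- A bimultiplicative pairing on `G`, encoded as a homomorphism to the dual group. It is
nondegenerate if it is injective, and its left radical is its kernel. -/
abbrev Pairing (G : Type*) [AddCommGroup G] := G →+ AddChar G ℂ

namespace Pairing

variable {G : Type*} [AddCommGroup G] (β : Pairing G)

lemma map_add_left (x y z : G) : β (x + y) z = β x z * β y z := by
  rw [map_add, AddChar.add_apply]

lemma map_zero_left (z : G) : β 0 z = 1 := by rw [map_zero, AddChar.zero_apply]

/-- The right orthogonal complement of a subgroup. -/
def perp (U : AddSubgroup G) : AddSubgroup G where
  carrier := {y | ∀ x ∈ U, β x y = 1}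
  zero_mem' x _ := (β x).map_zero_eq_one
  add_mem' ha hb x hx := by rw [(β x).map_add_eq_mul, ha x hx, hb x hx, one_mul]
  neg_mem' ha x hx := by rw [(β x).map_neg_eq_inv, ha x hx, inv_one]

/-- `Q` is a multiplicative quadratic form with polar form `β`. -/
def IsQuadratic (Q : G → ℂ) : Prop := ∀ x y, Q (x + y) = Q x * Q y * β x y

lemma sum_subgroup (U : AddSubgroup G) [Fintype U] (y : G) [Decidable (y ∈ β.perp U)] :
    ∑ u : U, β u y = if y ∈ β.perp U then (Nat.card U : ℂ) else 0 := by
  classical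
  let ψ : AddChar U ℂ :=
    { toFun u := β u y
      map_zero_eq_one' := β.map_zero_left y
      map_add_eq_mul' u v := β.map_add_left u v y }
  have hψ : ψ = 0 ↔ y ∈ β.perp U := by
    rw [AddChar.eq_zero_iff]
    exact Subtype.forall
  have hsum := AddChar.sum_eq_ite ψ
  simp only [hψ, ← Nat.card_eq_fintype_card] at hsum
  exact hsum

theorem card_mul_card_perp [Finite G] (U : AddSubgroup G) :
    Nat.card U * Nat.card (β.perp U) = Nat.card G * Nat.card (β.ker.addSubgroupOf U) := by
  classical
  have := Fintype.ofFinite G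
  have hrows : ∑ y : G, ∑ u : U, β u y = (Nat.card U * Nat.card (β.perp U) : ℕ) := by
    simp only [β.sum_subgroup U]
    rw [← sum_filter, sum_const, nsmul_eq_mul, mul_comm, Nat.cast_mul,
      Nat.card_eq_fintype_card (α := β.perp U), Fintype.card_subtype]
  have hcols : ∑ u : U, ∑ y : G, β u y =
      (Nat.card G * Nat.card (β.ker.addSubgroupOf U) : ℕ) := by
    simp only [AddChar.sum_eq_ite]
    rw [← sum_filter, sum_const, nsmul_eq_mul, mul_comm, Nat.cast_mul,
      Nat.card_eq_fintype_card (α := G), Nat.card_eq_fintype_card (α := β.ker.addSubgroupOf U),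
      Fintype.card_subtype]
    simp only [AddSubgroup.mem_addSubgroupOf, AddMonoidHom.mem_ker]
  rw [sum_comm, hcols] at hrows
  exact_mod_cast hrows.symm

lemma card_mul_card_perp_of_injective [Finite G] (hβ : Function.Injective β)
    (U : AddSubgroup G) : Nat.card U * Nat.card (β.perp U) = Nat.card G := by
  rw [card_mul_card_perp, (AddMonoidHom.ker_eq_bot_iff β).2 hβ, AddSubgroup.bot_addSubgroupOf,
    AddSubgroup.card_bot, mul_one]

lemma perp_perp [Finite G] (hβ : Function.Injective β) (hsymm : ∀ x y, β x y = β y x)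
    (U : AddSubgroup G) : β.perp (β.perp U) = U := by
  have hle : U ≤ β.perp (β.perp U) := fun x hx y hy ↦ by rw [hsymm, hy x hx]
  have hcard := (β.card_mul_card_perp_of_injective hβ U).trans
    (β.card_mul_card_perp_of_injective hβ (β.perp U)).symm
  rw [mul_comm] at hcard
  exact (AddSubgroup.eq_of_le_of_card_ge hle
    (Nat.eq_of_mul_eq_mul_left Nat.card_pos hcard).ge).symm

lemma exists_eq_of_injective [Finite G] (hβ : Function.Injective β) (X : AddChar G ℂ) :
    ∃ w, β w = X := by
  have := Fintype.ofFinite G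
  have hcard : Fintype.card G = Fintype.card (AddChar G ℂ) := AddChar.card_eq.symm
  exact ((Fintype.bijective_iff_injective_and_card β).2 ⟨hβ, hcard⟩).2 X

lemma perp_sup (U W : AddSubgroup G) : β.perp (U ⊔ W) = β.perp U ⊓ β.perp W := by
  refine le_antisymm (fun y hy ↦ ⟨fun x hx ↦ hy x (AddSubgroup.mem_sup_left hx),
    fun x hx ↦ hy x (AddSubgroup.mem_sup_right hx)⟩) fun y hy x hx ↦ ?_
  obtain ⟨u, hu, w, hw, rfl⟩ := AddSubgroup.mem_sup.1 hx
  rw [map_add_left, hy.1 u hu, hy.2 w hw, one_mul]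

section Averaging

variable {β} [Fintype G] {Q : G → ℂ} {U : AddSubgroup G}

/-- Average `Q (u + x) = Q x * β u x` over `u ∈ U`. -/
theorem IsQuadratic.sum_eq_sum_perp [DecidablePred (· ∈ β.perp U)] (hQ : β.IsQuadratic Q)
    (hU : ∀ u ∈ U, Q u = 1) : ∑ x, Q x = ∑ x with x ∈ β.perp U, Q x := by
  classical
  have hcard : (Nat.card U : ℂ) ≠ 0 := Nat.cast_ne_zero.2 Nat.card_pos.ne'
  have htranslate (u : U) : ∑ x, Q x * β u x = ∑ x, Q x := by
    rw [← Equiv.sum_comp (Equiv.addLeft (u : G)) Q]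
    exact sum_congr rfl fun x _ ↦ by rw [Equiv.coe_addLeft, hQ, hU u u.2, one_mul]
  have hsum : ∑ u : U, ∑ x, Q x * β u x = Nat.card U * ∑ x, Q x := by
    simp only [htranslate, sum_const, nsmul_eq_mul, card_univ, Nat.card_eq_fintype_card]
  rw [sum_comm] at hsum
  simp only [← mul_sum, β.sum_subgroup U, mul_ite, mul_zero] at hsum
  rw [← sum_filter, ← sum_mul, mul_comm] at hsum
  exact (mul_left_cancel₀ hcard hsum).symm

theorem IsQuadratic.sum_eq_card_of_perp_eq (hQ : β.IsQuadratic Q) (hU : ∀ u ∈ U, Q u = 1)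
    (hperp : β.perp U = U) : ∑ x, Q x = Nat.card U := by
  classical
  rw [hQ.sum_eq_sum_perp hU, hperp,
    sum_congr rfl (g := fun _ ↦ (1 : ℂ)) fun x hx ↦ hU x (mem_filter.1 hx).2]
  simp [Nat.card_eq_fintype_card, Fintype.card_subtype]

end Averaging

section Alternating

variable {β} (halt : ∀ x, β x x = 1)
include halt

lemma mul_swap_eq_one (x y : G) : β x y * β y x = 1 := by
  have h := halt (x + y)
  rwa [map_add_left, AddChar.map_add_eq_mul, AddChar.map_add_eq_mul, halt, halt, one_mul,
    mul_one] at h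

lemma eq_one_of_swap_eq_one {x y : G} (h : β x y = 1) : β y x = 1 := by
  simpa [h] using mul_swap_eq_one halt x y

lemma le_perp_comm {U W : AddSubgroup G} (h : U ≤ β.perp W) : W ≤ β.perp U :=
  fun w hw _ hu ↦ eq_one_of_swap_eq_one halt (h hu w hw)

lemma zmultiples_le_perp_self (g : G) :
    AddSubgroup.zmultiples g ≤ β.perp (AddSubgroup.zmultiples g) := by
  refine AddSubgroup.zmultiples_le.2 fun x hx ↦ ?_
  obtain ⟨n, rfl⟩ := AddSubgroup.mem_zmultiples_iff.1 hx
  rw [map_zsmul, AddChar.zsmul_apply, halt, one_zpow]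

/-- A maximal self-orthogonal subgroup of an alternating pairing is its own complement. -/
theorem isSquare_card_mul_card_ker [Finite G] : IsSquare (Nat.card G * Nat.card β.ker) := by
  obtain ⟨U, hU⟩ := Set.Finite.exists_maximal (Set.toFinite {U : AddSubgroup G | U ≤ β.perp U})
    ⟨⊥, (bot_le : ⊥ ≤ β.perp ⊥)⟩
  have hUperp : β.perp U = U := by
    refine le_antisymm (fun g hg ↦ ?_) hU.1
    have hgU : AddSubgroup.zmultiples g ≤ β.perp U := AddSubgroup.zmultiples_le.2 hg
    have hW : U ⊔ AddSubgroup.zmultiples g ≤ β.perp (U ⊔ AddSubgroup.zmultiples g) := by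
      rw [perp_sup]
      exact sup_le (le_inf hU.1 (le_perp_comm halt hgU))
        (le_inf hgU (zmultiples_le_perp_self halt g))
    exact hU.2 hW le_sup_left (AddSubgroup.mem_sup_right (AddSubgroup.mem_zmultiples g))
  have hker : β.ker ≤ U := by
    rw [← hUperp]
    exact le_perp_comm halt fun x _ y hy ↦ by rw [AddMonoidHom.mem_ker.1 hy]; rfl
  refine ⟨Nat.card U, ?_⟩
  have hcard := β.card_mul_card_perp U
  rw [hUperp] at hcard
  rw [hcard, Nat.card_congr (AddSubgroup.addSubgroupOfEquivOfLe hker).toEquiv]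

end Alternating

section SignPairing

variable {X : AddChar G ℂ}

lemma add_self_of_eq_one_or_neg_one (hX : ∀ x, X x = 1 ∨ X x = -1) : X + X = 0 := by
  ext x
  rw [AddChar.add_apply, AddChar.zero_apply, mul_self_eq_one_iff.2 (hX x)]

open scoped Classical in
/-- The pairing attached to a sign character `X`, with value `-1` at `(u, v)` exactly when
`X u = X v = -1`. -/
noncomputable def sign (hX : ∀ x, X x = 1 ∨ X x = -1) : Pairing G :=
  AddMonoidHom.mk' (fun u ↦ if X u = 1 then 0 else X) fun u v ↦ by
    have hXX := add_self_of_eq_one_or_neg_one hX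
    have hne : (-1 : ℂ) ≠ 1 := by norm_num
    rcases hX u with hu | hu <;> rcases hX v with hv | hv <;>
      simp [X.map_add_eq_mul, hu, hv, hne, hXX]

open scoped Classical in
lemma sign_apply (hX : ∀ x, X x = 1 ∨ X x = -1) (u : G) :
    sign hX u = if X u = 1 then 0 else X := rfl

lemma sign_self (hX : ∀ x, X x = 1 ∨ X x = -1) (u : G) : sign hX u u = X u := by
  rw [sign_apply]
  split_ifs with hu
  · exact hu.symm
  · rfl

end SignPairing

section SelfAdjoint

variable {β} {N : G →+ G} (hN : ∀ u v, β (N u) v = β u (N v))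

include hN in
lemma range_eq_perp_ker [Finite G] (hβ : Function.Injective β) : N.range = β.perp N.ker := by
  have hle : N.range ≤ β.perp N.ker := by
    rintro _ ⟨y, rfl⟩ x hx
    rw [← hN, AddMonoidHom.mem_ker.1 hx, map_zero_left]
  have hcard := N.ker.card_mul_index
  rw [AddSubgroup.index_ker, ← β.card_mul_card_perp_of_injective hβ N.ker] at hcard
  exact AddSubgroup.eq_of_le_of_card_ge hle
    (Nat.eq_of_mul_eq_mul_left Nat.card_pos hcard).ge

variable (htwo : ∀ u : G, u + u = 0) (halt : ∀ u, β u u = 1)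

include htwo in
lemma eq_one_or_neg_one (X : AddChar G ℂ) (u : G) : X u = 1 ∨ X u = -1 := by
  rw [← mul_self_eq_one_iff, ← X.map_add_eq_mul, htwo, X.map_zero_eq_one]

include htwo halt in
lemma symm_of_exponent_two (u v : G) : β u v = β v u := by
  rcases eq_one_or_neg_one htwo (β v) u with h | h
  · rw [h, eq_one_of_swap_eq_one halt h]
  · have hswap := mul_swap_eq_one halt u v
    rw [h] at hswap ⊢
    linear_combination -hswap

/-- The character `v ↦ β v (N v)`; in exponent two it is additive because the cross terms
`β u (N v)` and `β v (N u)` are equal signs. -/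
def diagChar : AddChar G ℂ where
  toFun v := β v (N v)
  map_zero_eq_one' := β.map_zero_left _
  map_add_eq_mul' u v := by
    have hcross : β u (N v) * β v (N u) = 1 := by
      rw [← hN, symm_of_exponent_two htwo halt, ← AddChar.map_add_eq_mul, htwo,
        AddChar.map_zero_eq_one]
    rw [map_add_left, map_add, AddChar.map_add_eq_mul, AddChar.map_add_eq_mul]
    linear_combination β u (N u) * β v (N v) * hcross

lemma diagChar_apply (v : G) : diagChar hN htwo halt v = β v (N v) := rfl

lemma exists_eq_diagChar [Finite G] (hβ : Function.Injective β) :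
    ∃ ν, β (N ν) = diagChar hN htwo halt := by
  obtain ⟨w, hw⟩ := β.exists_eq_of_injective hβ (diagChar hN htwo halt)
  have hwrange : w ∈ N.range := by
    rw [range_eq_perp_ker hN hβ]
    intro x hx
    rw [symm_of_exponent_two htwo halt, hw, diagChar_apply, AddMonoidHom.mem_ker.1 hx,
      AddChar.map_zero_eq_one]
  obtain ⟨ν, rfl⟩ := hwrange
  exact ⟨ν, hw⟩

/-- Otherwise `(u, v) ↦ β (N u) v`, corrected by the sign pairing of `X = diagChar`, would be
alternating with the same radical `N.ker`. -/
theorem diagChar_eq_neg_one [Finite G] (hβ : Function.Injective β)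
    (hsq : ¬IsSquare (Nat.card G * Nat.card N.ker)) {ν : G}
    (hν : β (N ν) = diagChar hN htwo halt) : diagChar hN htwo halt ν = -1 := by
  set X := diagChar hN htwo halt
  have hsign := eq_one_or_neg_one htwo X
  refine (hsign ν).resolve_left fun hXν ↦ hsq ?_
  let β' : Pairing G := β.comp N + sign hsign
  have hβ' (u : G) : β' u = β (N u) + sign hsign u := rfl
  have hself (u : G) : β (N u) u = X u := hN u u
  have hker : β'.ker = N.ker := by
    ext u
    simp only [AddMonoidHom.mem_ker, hβ', sign_apply]
    refine ⟨fun hu ↦ ?_, fun hu ↦ ?_⟩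
    · split_ifs at hu with hXu
      · rwa [add_zero, map_eq_zero_iff β hβ] at hu
      · have hNu : N u = N ν := hβ <| by
          rw [hν, eq_neg_of_add_eq_zero_left hu, neg_eq_iff_add_eq_zero,
            add_self_of_eq_one_or_neg_one hsign]
        exact absurd (by rw [← hXν, ← hself u, hNu, hN, hNu, ← hN, hself]) hXu
    · have hXu : X u = 1 := by rw [← hself, hu, map_zero_left]
      rw [hu, map_zero, zero_add, if_pos hXu]
  rw [← hker]
  refine isSquare_card_mul_card_ker fun u ↦ ?_
  rw [hβ', AddChar.add_apply, hself, sign_self, mul_self_eq_one_iff]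
  exact hsign u

include hN htwo halt in
theorem IsQuadratic.sum_mul_eq_neg_sum [Fintype G] {Q : G → ℂ} (hQ : β.IsQuadratic Q)
    (hβ : Function.Injective β) (hsq : ¬IsSquare (Nat.card G * Nat.card N.ker))
    (hQN : ∀ v, Q (N v) = β v (N v)) : ∑ v, Q v * Q (N v) = -∑ v, Q v := by
  obtain ⟨ν, hν⟩ := exists_eq_diagChar hN htwo halt hβ
  have hshift (v : G) : Q v * Q (N v) = -Q (v + N ν) := by
    have hXν : Q (N ν) = -1 := by rw [hQN, ← diagChar_eq_neg_one hN htwo halt hβ hsq hν]; rfl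
    have hX : β v (N ν) = Q (N v) := by rw [symm_of_exponent_two htwo halt, hν, hQN]; rfl
    rw [hQ, hXν, hX]
    ring
  simp only [hshift, sum_neg_distrib]
  rw [← Equiv.sum_comp (Equiv.addRight (N ν)) Q]
  rfl

end SelfAdjoint

/-- The pairing `(x, y) ↦ ψ (B x y)` attached to a biadditive map and an additive character. -/
def ofBiadditive {M : Type*} [AddCommGroup M] (B : G →+ G →+ M) (ψ : AddChar M ℂ) : Pairing G :=
  AddMonoidHom.mk' (fun x ↦ ψ.compAddMonoidHom (B x)) fun x y ↦ by
    ext z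
    simp only [AddChar.compAddMonoidHom_apply, map_add, AddMonoidHom.add_apply,
      AddChar.map_add_eq_mul, AddChar.add_apply]

@[simp] lemma ofBiadditive_apply {M : Type*} [AddCommGroup M] (B : G →+ G →+ M)
    (ψ : AddChar M ℂ) (x y : G) : ofBiadditive B ψ x y = ψ (B x y) := rfl

end Pairing

section CommutatorForm

variable {K : Type*} [Field K] {p e : ℕ} [IsCharPow K p] {a : ℕ → K}

lemma omegaHom_swap (x y : K) : omegaHom p e a x y = -omegaHom p e a y x := by
  rw [omegaHom_apply, omegaHom_apply, neg_sub]

lemma omegaHom_smul_left {c : K} (hc : c ^ p = c) (x y : K) :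
    omegaHom p e a (c * x) y = c * omegaHom p e a x y := by
  rw [omegaHom_apply, fgen_smul_left hc, fgen_smul_right hc, omegaHom_apply, mul_sub]

lemma omegaHom_mem_fixedField {x y : K} (hx : x ∈ (EgenHom p e a).ker)
    (hy : y ∈ (EgenHom p e a).ker) : omegaHom p e a x y ∈ fixedField K p 1 := by
  have h := omegaHom_pow_sub_self (p := p) e a x y
  rw [AddMonoidHom.mem_ker, EgenHom_apply] at hx hy
  rwa [hx, hy, mul_zero, mul_zero, sub_self, sub_eq_zero, ← mem_fixedField_one] at h

variable (p e a) in
/-- The commutator form on `V_R`, where it takes values in the field of `p` elements. -/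
def omegaV : (EgenHom p e a).ker →+ (EgenHom p e a).ker →+ fixedField K p 1 :=
  AddMonoidHom.mk' (fun x ↦ AddMonoidHom.mk'
      (fun y ↦ ⟨omegaHom p e a x y, omegaHom_mem_fixedField x.2 y.2⟩)
      fun y y' ↦ Subtype.ext (map_add (omegaHom p e a x) (y : K) y'))
    fun x x' ↦ AddMonoidHom.ext fun y ↦ Subtype.ext <| by
      change omegaHom p e a (x + x' : K) y = omegaHom p e a x y + omegaHom p e a x' y
      rw [map_add, AddMonoidHom.add_apply]

@[simp] lemma coe_omegaV (x y : (EgenHom p e a).ker) :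
    (omegaV p e a x y : K) = omegaHom p e a x y := rfl

lemma smul_mem_ker_EgenHom {c x : K} (hc : c ^ p = c) (hx : x ∈ (EgenHom p e a).ker) :
    c * x ∈ (EgenHom p e a).ker := by
  rw [AddMonoidHom.mem_ker, EgenHom_apply] at hx ⊢
  rw [Egen_smul hc, hx, mul_zero]

lemma coe_pow_self (c : fixedField K p 1) : (c : K) ^ p = c :=
  mem_fixedField_one.1 c.2

variable {ψ : AddChar (fixedField K p 1) ℂ}

lemma mem_perp_omegaV_iff (hψ : ψ ≠ 0) {U : AddSubgroup (EgenHom p e a).ker}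
    (hU : ∀ (c : fixedField K p 1) (u : (EgenHom p e a).ker), u ∈ U →
      ⟨c * u, smul_mem_ker_EgenHom (coe_pow_self c) u.2⟩ ∈ U) {v : (EgenHom p e a).ker} :
    v ∈ (Pairing.ofBiadditive (omegaV p e a) ψ).perp U ↔ ∀ u ∈ U, omegaV p e a u v = 0 := by
  refine ⟨fun hv u hu ↦ ?_, fun hv u hu ↦ ?_⟩
  · by_contra hne
    refine AddChar.IsPrimitive.of_ne_one hψ hne (DFunLike.ext _ _ fun c ↦ ?_)
    rw [AddChar.mulShift_apply, AddChar.one_apply, ← hv _ (hU c u hu), mul_comm]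
    exact congrArg ψ (Subtype.ext (omegaHom_smul_left (coe_pow_self c) (u : K) v).symm)
  · rw [Pairing.ofBiadditive_apply, hv u hu, AddChar.map_zero_eq_one]

theorem injective_pairing_omegaV [IsAlgClosed K] (hae : a e ≠ 0) (h2 : e = 0 → (2 : K) ≠ 0)
    (hψ : ψ ≠ 0) : Function.Injective (Pairing.ofBiadditive (omegaV p e a) ψ) := by
  refine (injective_iff_map_eq_zero _).2 fun v hv ↦ ?_
  have hperp : v ∈ (Pairing.ofBiadditive (omegaV p e a) ψ).perp ⊤ := fun u _ ↦ by
    have huv : omegaV p e a u v = -omegaV p e a v u := Subtype.ext (omegaHom_swap (u : K) v)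
    rw [Pairing.ofBiadditive_apply, huv, AddChar.map_neg_eq_inv, ← Pairing.ofBiadditive_apply, hv,
      AddChar.zero_apply, inv_one]
  rw [mem_perp_omegaV_iff hψ fun _ _ _ ↦ AddSubgroup.mem_top _] at hperp
  exact Subtype.ext <| eq_zero_of_omegaHom_eq_zero hae h2 v.2 fun x hx ↦
    congrArg Subtype.val (hperp ⟨x, hx⟩ (AddSubgroup.mem_top _))

end CommutatorForm

section Lagrangian

variable {K : Type*} [Field K]

/-- `A` is a Lagrangian subgroup of `V_R`: it equals its own complement in `V_R` for the
commutator form. -/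
structure IsLagrangian (p e : ℕ) [IsCharPow K p] (a : ℕ → K) (A : AddSubgroup K) : Prop where
  le_ker : A ≤ (EgenHom p e a).ker
  mem_iff : ∀ v ∈ (EgenHom p e a).ker, v ∈ A ↔ ∀ x ∈ A, omegaHom p e a x v = 0

variable {p e : ℕ} [IsCharPow K p] {a : ℕ → K} {A : AddSubgroup K}

namespace IsLagrangian

lemma omegaHom_eq_zero (hA : IsLagrangian p e a A) {x y : K} (hx : x ∈ A) (hy : y ∈ A) :
    omegaHom p e a x y = 0 :=
  (hA.mem_iff y (hA.le_ker hy)).1 hy x hx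

lemma smul_mem (hA : IsLagrangian p e a A) {c x : K} (hc : c ^ p = c) (hx : x ∈ A) :
    c * x ∈ A := by
  refine (hA.mem_iff _ (smul_mem_ker_EgenHom (p := p) hc (hA.le_ker hx))).2 fun y hy ↦ ?_
  rw [omegaHom_swap, omegaHom_smul_left hc, hA.omegaHom_eq_zero hx hy, mul_zero, neg_zero]

theorem card_eq [IsAlgClosed K] (hA : IsLagrangian p e a A) (hae : a e ≠ 0)
    (h2 : e = 0 → (2 : K) ≠ 0) : Nat.card A = p ^ e := by
  have := finite_ker_EgenHom (p := p) hae h2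
  obtain ⟨ψ, hψ⟩ := exists_addChar_ne_zero (fixedField K p 1)
  set β := Pairing.ofBiadditive (omegaV p e a) ψ
  set U := A.addSubgroupOf (EgenHom p e a).ker
  have hperp : β.perp U = U := by
    ext v
    rw [mem_perp_omegaV_iff hψ fun c u hu ↦ hA.smul_mem (coe_pow_self c) hu,
      AddSubgroup.mem_addSubgroupOf, hA.mem_iff v v.2]
    exact ⟨fun h x hx ↦ congrArg Subtype.val (h ⟨x, hA.le_ker hx⟩ hx),
      fun h u hu ↦ Subtype.ext (h u hu)⟩
  have hcard := β.card_mul_card_perp_of_injective (injective_pairing_omegaV hae h2 hψ) U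
  rwa [hperp, Nat.card_congr (AddSubgroup.addSubgroupOfEquivOfLe hA.le_ker).toEquiv,
    card_ker_EgenHom hae h2, mul_comm 2 e, pow_mul, sq, Nat.mul_self_inj] at hcard

end IsLagrangian

end Lagrangian

section HeisenbergGroup

variable {K : Type*} [Field K] {p e : ℕ} {a : ℕ → K} {S : Set (K × K)}

/-- `T` is an abelian subgroup of `H_R`. -/
structure IsAbelianSubgroup (p e : ℕ) (a : ℕ → K) (T : Set (K × K)) : Prop where
  subset : T ⊆ Hset p e a
  zero_mem : (0, 0) ∈ T
  mul_mem : ∀ h ∈ T, ∀ h' ∈ T, Hmul p e a h h' ∈ T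
  exists_inv : ∀ h ∈ T, ∃ h' ∈ T, Hmul p e a h h' = (0, 0)
  comm : ∀ h ∈ T, ∀ h' ∈ T, Hmul p e a h h' = Hmul p e a h' h

/-- The projection of an abelian subgroup of `H_R` to `V_R`. -/
def IsAbelianSubgroup.fst (hS : IsAbelianSubgroup p e a S) : AddSubgroup K where
  carrier := {x | ∃ b, (x, b) ∈ S}
  zero_mem' := ⟨0, hS.zero_mem⟩
  add_mem' := fun ⟨_, hb⟩ ⟨_, hc⟩ ↦ ⟨_, hS.mul_mem _ hb _ hc⟩
  neg_mem' := fun {x} ⟨b, hb⟩ ↦ by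
    obtain ⟨⟨y, c⟩, hy, hxy⟩ := hS.exists_inv _ hb
    have hadd : x + y = 0 := congrArg Prod.fst hxy
    rw [neg_eq_of_add_eq_zero_right hadd]
    exact ⟨c, hy⟩

variable [IsCharPow K p]

lemma Hmul_mem_Hset {h h' : K × K} (hh : h ∈ Hset p e a) (hh' : h' ∈ Hset p e a) :
    Hmul p e a h h' ∈ Hset p e a := by
  obtain ⟨x, b⟩ := h
  obtain ⟨y, c⟩ := h'
  obtain ⟨hx, hb⟩ : Egen p e a x = 0 ∧ b ^ p - b = x * Rgen p e a x := hh
  obtain ⟨hy, hc⟩ : Egen p e a y = 0 ∧ c ^ p - c = y * Rgen p e a y := hh'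
  have hf := fgen_pow_sub_self (p := p) e a x y
  rw [hy] at hf
  refine ⟨?_, ?_⟩
  · simp only [Hmul, Egen_add, hx, hy, add_zero]
  · simp only [Hmul, add_pow_self, Rgen_add]
    linear_combination hf + hb + hc

lemma exists_inv_mem_Hset {x b : K} (h : (x, b) ∈ Hset p e a) :
    ∃ c, (-x, c) ∈ Hset p e a ∧ Hmul p e a (x, b) (-x, c) = (0, 0) := by
  obtain ⟨hx, hb⟩ : Egen p e a x = 0 ∧ b ^ p - b = x * Rgen p e a x := h
  have hf := fgen_pow_sub_self (p := p) e a x x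
  have hR : Rgen p e a (-x) = -Rgen p e a x := map_neg (AddMonoidHom.mk' _ (Rgen_add e a)) x
  rw [hx] at hf
  refine ⟨fgen p e a x x - b, ⟨?_, ?_⟩, Prod.ext (add_neg_cancel x) ?_⟩
  · exact (map_neg (EgenHom p e a) x).trans (neg_eq_zero.2 hx)
  · simp only [sub_pow_self, hR]
    linear_combination hf - hb
  · have hneg : fgen p e a x (-x) = -fgen p e a x x := map_neg (fgenHom p e a x) x
    simp only [Hmul, hneg]
    ring

lemma isAbelianSubgroup_preimage {U : AddSubgroup K}
    (hω : ∀ x ∈ U, ∀ y ∈ U, omegaHom p e a x y = 0) :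
    IsAbelianSubgroup p e a {h ∈ Hset p e a | h.1 ∈ U} where
  subset _ h := h.1
  zero_mem := ⟨⟨map_zero (EgenHom p e a), by
    simp [(zero_lt_one.trans (IsCharPow.one_lt K p)).ne']⟩, U.zero_mem⟩
  mul_mem _ h _ h' := ⟨Hmul_mem_Hset h.1 h'.1, U.add_mem h.2 h'.2⟩
  exists_inv := fun ⟨_, _⟩ ⟨h, hxU⟩ ↦ by
    obtain ⟨c, hc, hmul⟩ := exists_inv_mem_Hset h
    exact ⟨_, ⟨hc, U.neg_mem hxU⟩, hmul⟩
  comm := fun h ⟨_, hx⟩ h' ⟨_, hy⟩ ↦ by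
    have hf := sub_eq_zero.1 (hω _ hx _ hy)
    refine Prod.ext (add_comm _ _) ?_
    simp only [fgenHom_apply, AddMonoidHom.flip_apply] at hf
    simp only [Hmul, hf, add_comm h.2]

lemma IsAbelianSubgroup.omegaHom_eq_zero (hS : IsAbelianSubgroup p e a S) {x y : K}
    (hx : x ∈ hS.fst) (hy : y ∈ hS.fst) : omegaHom p e a x y = 0 := by
  obtain ⟨b, hb⟩ := hx
  obtain ⟨c, hc⟩ := hy
  have hcomm := congrArg Prod.snd (hS.comm _ hb _ hc)
  simp only [Hmul] at hcomm
  rw [omegaHom_apply]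
  linear_combination hcomm

lemma mem_of_maximal (hS : Maximal (IsAbelianSubgroup p e a) S) {U : AddSubgroup K}
    (hSU : hS.1.fst ≤ U)
    (hω : ∀ x ∈ U, ∀ y ∈ U, omegaHom p e a x y = 0) {h : K × K} (hh : h ∈ Hset p e a)
    (hhU : h.1 ∈ U) : h ∈ S :=
  hS.2 (isAbelianSubgroup_preimage hω)
    (fun z hz ↦ ⟨hS.1.subset hz, hSU ⟨z.2, hz⟩⟩) ⟨hh, hhU⟩

lemma omegaHom_eq_zero_of_mem_sup_zmultiples {A : AddSubgroup K} {v : K}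
    (hA : ∀ x ∈ A, ∀ y ∈ A, omegaHom p e a x y = 0) (hv : ∀ x ∈ A, omegaHom p e a x v = 0) :
    ∀ x ∈ A ⊔ AddSubgroup.zmultiples v, ∀ y ∈ A ⊔ AddSubgroup.zmultiples v,
      omegaHom p e a x y = 0 := by
  intro x hx y hy
  obtain ⟨x', hx', _, ⟨n, rfl⟩, rfl⟩ := AddSubgroup.mem_sup.1 hx
  obtain ⟨y', hy', _, ⟨m, rfl⟩, rfl⟩ := AddSubgroup.mem_sup.1 hy
  have hvv : omegaHom p e a v v = 0 := sub_self _
  simp only [map_add, map_zsmul, AddMonoidHom.add_apply, AddMonoidHom.zsmul_apply,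
    hA x' hx' y' hy', hv x' hx', omegaHom_swap v y', hv y' hy', hvv, neg_zero, smul_zero, add_zero]

theorem isLagrangian_fst_of_maximal [IsAlgClosed K] (hS : Maximal (IsAbelianSubgroup p e a) S) :
    IsLagrangian p e a hS.1.fst := by
  have hker : hS.1.fst ≤ (EgenHom p e a).ker := fun _ ⟨_, hb⟩ ↦ (hS.1.subset hb).1
  refine ⟨hker, fun v hv ↦ ⟨fun hvS x hx ↦ hS.1.omegaHom_eq_zero hx hvS, fun hvS ↦ ?_⟩⟩
  obtain ⟨b, hb⟩ := exists_pow_sub_self_eq (IsCharPow.one_lt K p) (v * Rgen p e a v)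
  have hvU : v ∈ hS.1.fst ⊔ AddSubgroup.zmultiples v :=
    AddSubgroup.mem_sup_right (AddSubgroup.mem_zmultiples v)
  exact ⟨b, mem_of_maximal hS le_sup_left (omegaHom_eq_zero_of_mem_sup_zmultiples
    (fun _ hx _ hy ↦ hS.1.omegaHom_eq_zero hx hy) hvS) ⟨hv, hb⟩ hvU⟩

/-- A Lagrangian of `V_R` such that all points of `H_R` above it have coordinates in the
field with `p ^ s` elements. -/
structure IsRationalLagrangian (p e s : ℕ) [IsCharPow K p] (a : ℕ → K) (A : AddSubgroup K) : Prop
    extends IsLagrangian p e a A where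
  pow_eq_self : ∀ x ∈ A, x ^ p ^ s = x
  lift_pow_eq_self : ∀ x ∈ A, ∀ b, b ^ p - b = x * Rgen p e a x → b ^ p ^ s = b

theorem isRationalLagrangian_fst_of_maximal [IsAlgClosed K] {s : ℕ}
    (hS : Maximal (IsAbelianSubgroup p e a) S)
    (hfix : ∀ h ∈ S, h.1 ^ p ^ s = h.1 ∧ h.2 ^ p ^ s = h.2) :
    IsRationalLagrangian p e s a hS.1.fst where
  toIsLagrangian := isLagrangian_fst_of_maximal hS
  pow_eq_self := fun _ ⟨_, hb⟩ ↦ (hfix _ hb).1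
  lift_pow_eq_self x hx b hb := by
    have hlag := isLagrangian_fst_of_maximal hS
    exact (hfix (x, b) (mem_of_maximal hS le_rfl
      (fun _ hx _ hy ↦ hlag.omegaHom_eq_zero hx hy) ⟨hlag.le_ker hx, hb⟩ hx)).2

end HeisenbergGroup

section Counting

variable {G H : Type*} [AddCommGroup G] [Fintype G] [AddCommGroup H] [DecidableEq H]

lemma card_filter_map_eq (D : G →+ H) [DecidablePred (· ∈ D.range)] (w : H) :
    #{y | D y = w} = if w ∈ D.range then Nat.card D.ker else 0 := by
  classical
  split_ifs with hw
  · rw [AddMonoidHom.card_fiber_eq_of_mem_range D hw ⟨0, map_zero D⟩, Nat.card_eq_fintype_card,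
      Fintype.card_subtype]
    simp only [AddMonoidHom.mem_ker]
  · exact card_eq_zero.2 (filter_eq_empty_iff.2 fun y _ hy ↦ hw ⟨y, hy⟩)

omit [DecidableEq H] in
lemma sum_comp_addMonoidHom [Fintype H] (D : G →+ H) [DecidablePred (· ∈ D.range)] (g : H → ℂ) :
    ∑ x, g (D x) = Nat.card D.ker * ∑ z with z ∈ D.range, g z := by
  classical
  rw [← sum_fiberwise univ D fun x ↦ g (D x), sum_filter, mul_sum]
  refine sum_congr rfl fun z _ ↦ ?_
  rw [sum_congr rfl fun x hx ↦ congrArg g (mem_filter.1 hx).2, sum_const, card_filter_map_eq D z,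
    nsmul_eq_mul]
  split_ifs <;> simp

omit [Fintype G] [DecidableEq H] in
lemma card_ker_eq_card_of_range_eq_ker [Finite G] {k : Type*} [AddCommGroup k] {D : G →+ G}
    {T : G →+ k} (hT : Function.Surjective T) (hTD : T.ker = D.range) :
    Nat.card D.ker = Nat.card k := by
  have hindex := T.ker.card_mul_index
  rw [AddSubgroup.index_ker, AddMonoidHom.range_eq_top_of_surjective T hT, AddSubgroup.card_top,
    hTD, ← AddSubgroup.index_ker, ← D.ker.card_mul_index, mul_comm D.ker.index] at hindex
  exact (Nat.eq_of_mul_eq_mul_right (Nat.pos_of_ne_zero D.ker.index_ne_zero_of_finite)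
    (by lia)).symm

omit [DecidableEq H] in
theorem card_filter_eq_sum_addChar {k X : Type*} [AddCommGroup k] [Finite k] [Fintype X]
    [DecidableEq G] {D : G →+ G} {T : G →+ k} (hT : Function.Surjective T)
    (hTD : T.ker = D.range) (g : X → G) :
    (#{z : X × G | D z.2 = g z.1} : ℂ) = ∑ ψ : AddChar k ℂ, ∑ x, ψ (T (g x)) := by
  classical
  have := Fintype.ofFinite k
  have hfibre (x : X) : (#{y | D y = g x} : ℂ) = ∑ ψ : AddChar k ℂ, ψ (T (g x)) := by
    have hrange : g x ∈ D.range ↔ T (g x) = 0 := by rw [← hTD, AddMonoidHom.mem_ker]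
    rw [AddChar.sum_apply_eq_ite, card_filter_map_eq, card_ker_eq_card_of_range_eq_ker hT hTD,
      Nat.card_eq_fintype_card]
    simp only [hrange]
    split_ifs <;> simp
  rw [sum_comm, ← sum_congr rfl fun x _ ↦ hfibre x, card_filter, ← univ_product_univ, sum_product]
  simp only [card_filter]
  push_cast
  rfl

end Counting

/-- The additive map `x ↦ x ^ p ^ i - x`. -/
def frobSub (A : Type*) [CommRing A] (p i : ℕ) [IsCharPow A p] : A →+ A :=
  (powHom A p i).toAddMonoidHom - AddMonoidHom.id A

@[simp] lemma frobSub_apply {A : Type*} [CommRing A] {p i : ℕ} [IsCharPow A p] (x : A) :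
    frobSub A p i x = x ^ p ^ i - x := rfl

section Trace

variable {L K : Type*} [Field L] [Field K] [Algebra L K] {p m : ℕ} [IsCharPow K p]

variable (K) in
/-- The trace of a field `L` with `p ^ m` elements to the field of `p` elements, viewed inside
an extension `K`. -/
def absTrace [Finite L] (hL : Nat.card L = p ^ m) : L →+ fixedField K p 1 :=
  AddMonoidHom.mk' (fun z ↦ ⟨∑ i ∈ range m, algebraMap L K z ^ p ^ i, by
      have := Fintype.ofFinite L
      rw [mem_fixedField_one, ← sub_eq_zero, sum_range_pow_telescope, ← map_pow, ← hL,
        Nat.card_eq_fintype_card, FiniteField.pow_card, sub_self]⟩) fun x y ↦ Subtype.ext <| by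
    simp only [map_add, add_pow_pow, sum_add_distrib]
    rfl

variable [Finite L] (hL : Nat.card L = p ^ m)

lemma coe_absTrace (z : L) :
    (absTrace K hL z : K) = ∑ i ∈ range m, algebraMap L K z ^ p ^ i := rfl

lemma coe_absTrace_eq {Y : K} {z : L} (hY : Y ^ p - Y = algebraMap L K z) :
    (absTrace K hL z : K) = Y ^ p ^ m - Y := by
  simp only [coe_absTrace, ← hY, sub_pow_pow, ← pow_mul, ← pow_succ']
  rw [sum_range_sub (fun i ↦ Y ^ p ^ i), pow_zero, pow_one]

variable [IsAlgClosed K]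

include hL in
lemma exists_algebraMap_eq {x : K} (hx : x ^ p ^ m = x) : ∃ y : L, algebraMap L K y = x :=
  (mem_range_algebraMap_iff (K := K) hL).2 hx

lemma surjective_absTrace : Function.Surjective (absTrace K hL) := by
  intro c
  have hp := IsCharPow.one_lt K p
  have hm : m ≠ 0 := by
    rintro rfl
    exact (Finite.one_lt_card (α := L)).ne' hL
  obtain ⟨Y, hY⟩ := exists_pow_sub_self_eq (Nat.one_lt_pow hm hp) (c : K)
  obtain ⟨z, hz⟩ := exists_algebraMap_eq (K := K) hL (x := Y ^ p - Y) <| by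
    have hYc : Y ^ p ^ m = c + Y := sub_eq_iff_eq_add.1 hY
    rw [sub_pow_pow, ← pow_mul, mul_comm, pow_mul, hYc, add_pow_self, coe_pow_self]
    ring
  exact ⟨z, Subtype.ext ((coe_absTrace_eq hL hz.symm).trans hY)⟩

lemma ker_absTrace [IsCharPow L p] : (absTrace K hL).ker = (frobSub L p 1).range := by
  ext z
  rw [AddMonoidHom.mem_ker]
  refine ⟨fun hz ↦ ?_, ?_⟩
  · obtain ⟨Y, hY⟩ := exists_pow_sub_self_eq (IsCharPow.one_lt K p) (algebraMap L K z)
    have htrace := coe_absTrace_eq hL hY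
    rw [hz, ZeroMemClass.coe_zero, eq_comm, sub_eq_zero] at htrace
    obtain ⟨y, rfl⟩ := exists_algebraMap_eq hL htrace
    exact ⟨y, (algebraMap L K).injective (by simpa using hY)⟩
  · rintro ⟨y, rfl⟩
    have := Fintype.ofFinite L
    refine Subtype.ext ((coe_absTrace_eq hL (Y := algebraMap L K y) (by simp)).trans ?_)
    rw [← map_pow, ← hL, Nat.card_eq_fintype_card, FiniteField.pow_card, sub_self]
    rfl

lemma absTrace_pow_pow [IsCharPow L p] (i : ℕ) (z : L) :
    absTrace K hL (z ^ p ^ i) = absTrace K hL z := by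
  induction i with
  | zero => rw [pow_zero, pow_one]
  | succ i ih =>
    have hker : (z ^ p ^ i) ^ p - z ^ p ^ i ∈ (absTrace K hL).ker := by
      rw [ker_absTrace]
      exact ⟨z ^ p ^ i, by simp⟩
    rw [AddMonoidHom.mem_ker, map_sub, sub_eq_zero] at hker
    rw [pow_succ, pow_mul, hker, ih]

end Trace

section TraceCharacter

variable {L K : Type*} [Field L] [Finite L] [Field K] [Algebra L K] {p m : ℕ} [IsCharPow K p]
  (hL : Nat.card L = p ^ m) (ψ : AddChar (fixedField K p 1) ℂ)

/-- The additive character `ψ ∘ Tr` of a field with `p ^ m` elements. -/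
def traceChar : AddChar L ℂ := ψ.compAddMonoidHom (absTrace K hL)

lemma traceChar_apply (z : L) : traceChar hL ψ z = ψ (absTrace K hL z) := rfl

variable [IsAlgClosed K]

lemma traceChar_ne_zero {ψ : AddChar (fixedField K p 1) ℂ} (hψ : ψ ≠ 0) :
    traceChar hL ψ ≠ 0 := by
  rw [AddChar.ne_zero_iff] at hψ ⊢
  obtain ⟨c, hc⟩ := hψ
  obtain ⟨z, rfl⟩ := surjective_absTrace hL c
  exact ⟨z, hc⟩

variable [IsCharPow L p]

lemma traceChar_pow_pow (i : ℕ) (z : L) : traceChar hL ψ (z ^ p ^ i) = traceChar hL ψ z := by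
  rw [traceChar_apply, absTrace_pow_pow, traceChar_apply]

/-- Writing `t = Y ^ p ^ s - Y` gives `Y ^ p ^ (s * r) = Y + r * t = Y`, so `Y` lies in the field
with `p ^ (s * r)` elements. -/
lemma traceChar_eq_one_of_pow_eq_self {s r : ℕ} (hm : m = s * r) (hr : (r : K) = 0)
    {t : L} (ht : t ^ p ^ s = t) : traceChar hL ψ t = 1 := by
  subst hm
  have hs : s ≠ 0 := by
    rintro rfl
    exact (Finite.one_lt_card (α := L)).ne' (by rw [hL, zero_mul, pow_zero])
  obtain ⟨Y, hY⟩ := exists_pow_sub_self_eq (Nat.one_lt_pow hs (IsCharPow.one_lt K p))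
    (algebraMap L K t)
  have hiter (i : ℕ) : Y ^ p ^ (s * i) = Y + i * algebraMap L K t := by
    induction i with
    | zero => simp
    | succ i ih =>
      have hmul : (i * algebraMap L K t : K) ^ p ^ s = i * algebraMap L K t := by
        rw [mul_pow, ← map_pow, ht]
        exact congrArg (· * _) (map_natCast (powHom K p s) i)
      rw [Nat.mul_succ, pow_pow_add, ih, add_pow_pow, hmul, sub_eq_iff_eq_add.1 hY]
      push_cast
      ring
  obtain ⟨y, rfl⟩ := exists_algebraMap_eq hL (x := Y) (by rw [hiter, hr, zero_mul, add_zero])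
  have hy : t = y ^ p ^ s - y := (algebraMap L K).injective (by rw [← hY]; simp)
  rw [hy, AddChar.map_sub_eq_div, traceChar_pow_pow, div_self (AddChar.val_isUnit _ _).ne_zero]

theorem card_artinSchreier_eq [Fintype L] [DecidableEq L] (g : L → L) {c : ℂ}
    (hc : ∀ ψ : AddChar (fixedField K p 1) ℂ, ψ ≠ 0 → ∑ x, traceChar hL ψ (g x) = c) :
    (#{z : L × L | z.2 ^ p - z.2 = g z.1} : ℂ) = p ^ m + (p - 1) * c := by
  classical
  have := Fintype.ofFinite (fixedField K p 1)
  have hcount := card_filter_eq_sum_addChar (surjective_absTrace (K := K) hL) (ker_absTrace hL) g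
  have hchars : (#(univ.erase (0 : AddChar (fixedField K p 1) ℂ)) : ℂ) = p - 1 := by
    rw [card_erase_of_mem (mem_univ _), card_univ, AddChar.card_eq, ← Nat.card_eq_fintype_card,
      card_fixedField one_pos, pow_one, Nat.cast_pred (zero_lt_one.trans (IsCharPow.one_lt K p))]
  simp only [frobSub_apply, pow_one, ← traceChar_apply] at hcount
  rw [hcount, ← add_sum_erase _ _ (mem_univ 0),
    sum_congr rfl fun ψ hψ ↦ hc ψ (ne_of_mem_erase hψ), sum_const, nsmul_eq_mul, hchars]
  simp [traceChar_apply, ← Nat.card_eq_fintype_card, hL]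

end TraceCharacter

section AdditiveDivision

variable {F : Type*} [Field F] {p e : ℕ} {a c : ℕ → F} {A : AddSubgroup F}

/-- The additive polynomial `∑ i ≤ e, c i * X ^ p ^ i`. -/
noncomputable def Rpoly (p e : ℕ) (c : ℕ → F) : F[X] := Rgen p e (fun i ↦ C (c i)) X

lemma aeval_Rpoly {L : Type*} [CommRing L] [Algebra F L] (x : L) :
    aeval x (Rpoly p e c) = Rgen p e (fun i ↦ algebraMap F L (c i)) x := by
  simpa [Rpoly] using map_Rgen (aeval x).toRingHom p e (fun i ↦ C (c i)) X

lemma eval_Rpoly (x : F) : (Rpoly p e c).eval x = Rgen p e c x := aeval_Rpoly x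

lemma aeval_Epoly {L : Type*} [CommRing L] [Algebra F L] (x : L) :
    aeval x (Epoly p e a) = Egen p e (fun i ↦ algebraMap F L (a i)) x := by
  simpa [Epoly] using map_Egen (aeval x).toRingHom p e (fun i ↦ C (a i)) X

lemma map_powHom_Rpoly [IsCharPow F p] {s : ℕ} :
    (Rpoly p e c).map (powHom F p s) = Rpoly p e fun i ↦ c i ^ p ^ s := by
  simpa [Rpoly] using map_Rgen (mapRingHom (powHom F p s)) p e (fun i ↦ C (c i)) X

lemma coeff_Rpoly (hp : 1 < p) {i : ℕ} (hi : i ≤ e) : (Rpoly p e c).coeff (p ^ i) = c i := by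
  simp only [Rpoly, Rgen, finsetSum_coeff, coeff_C_mul_X_pow, Nat.pow_right_inj hp]
  rw [sum_ite_eq, if_pos (mem_range.2 (by lia))]

lemma degree_Rpoly_sub_lt (hp : 1 < p) :
    (Rpoly p e c - C (c e) * X ^ p ^ e).degree < ↑(p ^ e) := by
  rw [Rpoly, Rgen, sum_range_succ, add_sub_cancel_right, ← mem_degreeLT]
  refine Submodule.sum_mem _ fun i hi ↦ ?_
  rw [← smul_eq_C_mul]
  refine Submodule.smul_mem _ _ (mem_degreeLT.2 ?_)
  rw [degree_X_pow]
  exact Nat.cast_lt.2 (Nat.pow_lt_pow_right hp (mem_range.1 hi))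

variable [Finite F]

lemma eq_zero_of_degree_lt_card {f : F[X]} (hf : f.degree < Nat.card A)
    (hA : ∀ x ∈ A, f.eval x = 0) : f = 0 := by
  have := Fintype.ofFinite A
  refine eq_zero_of_degree_lt_of_eval_finset_eq_zero (univ.map (.subtype (· ∈ A))) ?_ (by simpa)
  rwa [card_map, card_univ, ← Nat.card_eq_fintype_card]

lemma leadingCoeff_ne_zero_of_vanishing (hp : 1 < p) (hA : Nat.card A = p ^ e)
    (hcA : ∀ x ∈ A, Rgen p e c x = 0) {i : ℕ} (hi : i ≤ e) (hci : c i ≠ 0) : c e ≠ 0 := by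
  intro hce
  have hdeg := degree_Rpoly_sub_lt (e := e) (c := c) hp
  rw [hce, C_0, zero_mul, sub_zero, ← hA] at hdeg
  have hzero := eq_zero_of_degree_lt_card hdeg fun x hx ↦ (eval_Rpoly x).trans (hcA x hx)
  exact hci (by rw [← coeff_Rpoly (c := c) hp hi, hzero, coeff_zero])

/-- A nonzero solution of the `e` linear equations `∑ i ≤ e, c i * b j ^ p ^ i = 0`, for a basis
`b` of `A` over the field of `p` elements. -/
lemma exists_Rgen_vanishing [IsCharPow F p] (hk : Nat.card (fixedField F p 1) = p)
    (hA : Nat.card A = p ^ e) (hsmul : ∀ t : F, t ^ p = t → ∀ x ∈ A, t * x ∈ A) :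
    ∃ c : ℕ → F, (∃ i ≤ e, c i ≠ 0) ∧ ∀ x ∈ A, Rgen p e c x = 0 := by
  let V : Submodule (fixedField F p 1) F :=
    { A with smul_mem' t x hx := hsmul t (mem_fixedField_one.1 t.2) x hx }
  have hfinrank : Module.finrank (fixedField F p 1) V = e := by
    have hV : Nat.card V = Nat.card (fixedField F p 1) ^ _ := Module.natCard_eq_pow_finrank
    rw [hk] at hV
    exact Nat.pow_right_injective (IsCharPow.one_lt F p) (hV.symm.trans hA)
  let b := Module.finBasisOfFinrankEq (fixedField F p 1) V hfinrank
  let M : Matrix (Fin e) (Fin (e + 1)) F := .of fun j i ↦ (b j : F) ^ p ^ (i : ℕ)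
  obtain ⟨c, hc, hc0⟩ := Submodule.exists_mem_ne_zero_of_ne_bot
    (LinearMap.ker_ne_bot_of_finrank_lt (f := M.mulVecLin) (by simp))
  obtain ⟨i, hi⟩ := Function.ne_iff.1 hc0
  refine ⟨fun i ↦ c (Fin.ofNat (e + 1) i), ⟨i, by lia, by simpa using hi⟩, ?_⟩
  let Φ : F →ₗ[fixedField F p 1] F :=
    { toFun := Rgen p e fun i ↦ c (Fin.ofNat (e + 1) i)
      map_add' := Rgen_add e _
      map_smul' t x := Rgen_smul (mem_fixedField_one.1 t.2) x }
  have hΦ : Φ ∘ₗ V.subtype = 0 := b.ext fun j ↦ by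
    have hj := congrFun hc j
    rw [Matrix.mulVecLin_apply] at hj
    simpa [Φ, Rgen, Finset.sum_range, Matrix.mulVec, dotProduct, M, mul_comm] using hj
  exact fun x hx ↦ LinearMap.congr_fun hΦ (⟨x, hx⟩ : V)

theorem exists_monic_Rgen_vanishing [IsCharPow F p] (hk : Nat.card (fixedField F p 1) = p)
    (hA : Nat.card A = p ^ e) (hsmul : ∀ t : F, t ^ p = t → ∀ x ∈ A, t * x ∈ A) :
    ∃ c : ℕ → F, c e = 1 ∧ ∀ x ∈ A, Rgen p e c x = 0 := by
  obtain ⟨c, ⟨i, hi, hci⟩, hcA⟩ := exists_Rgen_vanishing hk hA hsmul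
  have hce := leadingCoeff_ne_zero_of_vanishing (IsCharPow.one_lt F p) hA hcA hi hci
  refine ⟨fun i ↦ (c e)⁻¹ * c i, inv_mul_cancel₀ hce, fun x hx ↦ ?_⟩
  simp only [Rgen, mul_assoc, ← mul_sum]
  exact mul_eq_zero_of_right _ (hcA x hx)

end AdditiveDivision

section AdditiveFactorization

variable {F : Type*} [Field F] {p e : ℕ} [IsCharPow F p] {a c : ℕ → F} {A : AddSubgroup F}

lemma X_pow_mem_span_sup_degreeLT (hc : c e = 1) {i : ℕ} (hi : i ≤ 2 * e) :
    (X ^ p ^ i : F[X]) ∈ Submodule.span F (Set.range fun j : Fin (e + 1) ↦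
      Rpoly p e c ^ p ^ (j : ℕ)) ⊔ degreeLT F (p ^ e) := by
  set V := Submodule.span F (Set.range fun j : Fin (e + 1) ↦ Rpoly p e c ^ p ^ (j : ℕ)) ⊔
    degreeLT F (p ^ e)
  induction i using Nat.strong_induction_on with
  | _ i ih =>
    rcases lt_or_ge i e with hie | hie
    · refine (le_sup_right : _ ≤ V) (mem_degreeLT.2 ?_)
      rw [degree_X_pow]
      exact Nat.cast_lt.2 (Nat.pow_lt_pow_right (IsCharPow.one_lt F p) hie)
    · obtain ⟨j, rfl⟩ := Nat.exists_eq_add_of_le hie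
      have hdiv : (X ^ p ^ (e + j) : F[X]) = Rpoly p e c ^ p ^ j -
          ∑ l ∈ range e, (c l ^ p ^ j) • (X ^ p ^ (l + j) : F[X]) := by
        rw [Rpoly, Rgen, sum_pow_pow, sum_range_succ, hc]
        simp [mul_pow, pow_pow_add, smul_eq_C_mul]
      rw [hdiv]
      refine V.sub_mem ((le_sup_left : _ ≤ V) (Submodule.subset_span ⟨⟨j, by lia⟩, rfl⟩))
        (V.sum_mem fun l hl ↦ V.smul_mem _ ?_)
      have hle := mem_range.1 hl
      exact ih _ (by lia) (by lia)

lemma Epoly_mem_span_sup_degreeLT (hc : c e = 1) :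
    Epoly p e a ∈ Submodule.span F (Set.range fun j : Fin (e + 1) ↦
      Rpoly p e c ^ p ^ (j : ℕ)) ⊔ degreeLT F (p ^ e) := by
  rw [Epoly, Egen, Rgen, sum_pow_pow]
  refine Submodule.add_mem _ (Submodule.sum_mem _ fun i hi ↦ ?_) (Submodule.sum_mem _ fun i _ ↦ ?_)
  · rw [mul_pow, ← C_pow, ← smul_eq_C_mul, ← pow_pow_add]
    exact Submodule.smul_mem _ _ (X_pow_mem_span_sup_degreeLT hc (by have := mem_range.1 hi; lia))
  · rw [mul_pow, ← C_pow, ← smul_eq_C_mul]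
    exact Submodule.smul_mem _ _ (X_pow_mem_span_sup_degreeLT hc (by lia))

theorem exists_Epoly_eq_sum [Finite F] (hA : Nat.card A = p ^ e) (hc : c e = 1)
    (hcA : ∀ x ∈ A, Rgen p e c x = 0) (hEA : ∀ x ∈ A, Egen p e a x = 0) :
    ∃ g : ℕ → F, Epoly p e a = ∑ j ∈ range (e + 1), C (g j) * Rpoly p e c ^ p ^ j := by
  obtain ⟨G, hG, r, hr, hsum⟩ :=
    Submodule.mem_sup.1 (Epoly_mem_span_sup_degreeLT (p := p) (a := a) hc)
  obtain ⟨g, rfl⟩ := Submodule.mem_span_range_iff_exists_fun F |>.1 hG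
  have hpos := zero_lt_one.trans (IsCharPow.one_lt F p)
  have hr0 : r = 0 := by
    refine eq_zero_of_degree_lt_card (A := A) (by rw [hA]; exact mem_degreeLT.1 hr) fun x hx ↦ ?_
    have heval := congrArg (eval x) hsum
    rw [eval_add, eval_Epoly, hEA x hx, eval_finsetSum, sum_eq_zero fun i _ ↦ ?_, zero_add] at heval
    · exact heval
    · rw [eval_smul, eval_pow, eval_Rpoly, hcA x hx, zero_pow (pow_pos hpos _).ne', smul_zero]
  refine ⟨fun j ↦ g (Fin.ofNat (e + 1) j), ?_⟩
  rw [← hsum, hr0, add_zero, Finset.sum_range]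
  simp [smul_eq_C_mul]

section Derivative

variable {g : ℕ → F}
  (hg : Epoly p e a = ∑ j ∈ range (e + 1), C (g j) * Rpoly p e c ^ p ^ j)
include hg

lemma derivative_Epoly_eq_C_mul :
    derivative (Epoly p e a) = C (g 0) * derivative (Rpoly p e c) := by
  rw [hg, derivative_sum, sum_range_succ', sum_eq_zero fun j _ ↦ ?_, zero_add, pow_zero, pow_one,
    derivative_C_mul]
  rw [derivative_C_mul, derivative_pow_pow _ j.succ_pos, mul_zero]

variable (hae : a e ≠ 0) (h2 : e = 0 → (2 : F) ≠ 0)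
include hae h2

lemma C_mul_derivative_Rpoly_ne_zero : C (g 0) * derivative (Rpoly p e c) ≠ 0 := by
  obtain ⟨r, hr, hder⟩ := exists_derivative_Epoly_eq_C (p := p) hae h2
  rwa [← derivative_Epoly_eq_C_mul hg, hder, Ne, C_eq_zero]

lemma ne_zero_of_Epoly_eq_sum : g 0 ≠ 0 :=
  C_ne_zero.1 (left_ne_zero_of_mul (C_mul_derivative_Rpoly_ne_zero hg hae h2))

lemma pow_pow_eq_self_of_Epoly_eq_sum {s : ℕ} (ha : ∀ i, a i ^ p ^ s = a i)
    (hc : ∀ i ≤ e, c i ^ p ^ s = c i) : g 0 ^ p ^ s = g 0 := by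
  have hR : (Rpoly p e c).map (powHom F p s) = Rpoly p e c := by
    rw [map_powHom_Rpoly, Rpoly, Rpoly, Rgen, Rgen]
    exact sum_congr rfl fun i hi ↦ by rw [hc i (Nat.lt_succ_iff.1 (mem_range.1 hi))]
  have hE : (Epoly p e a).map (powHom F p s) = Epoly p e a := by
    simpa [Epoly, ha] using map_Egen (mapRingHom (powHom F p s)) p e (fun i ↦ C (a i)) X
  have hder := congrArg (map (powHom F p s)) (derivative_Epoly_eq_C_mul hg)
  rw [← derivative_map, hE, Polynomial.map_mul, ← derivative_map, hR, map_C,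
    derivative_Epoly_eq_C_mul hg] at hder
  exact C_injective (mul_right_cancel₀
    (right_ne_zero_of_mul (C_mul_derivative_Rpoly_ne_zero hg hae h2)) hder).symm

end Derivative

end AdditiveFactorization

lemma eq_zero_of_forall_mul_eq_one {L : Type*} [Field L] {χ : AddChar L ℂ} (hχ : χ ≠ 0) {u : L}
    (hu : ∀ z, χ (u * z) = 1) : u = 0 := by
  by_contra hu0
  exact AddChar.IsPrimitive.of_ne_one hχ hu0 (by ext z; exact hu z)

section Adjoint

variable {L K : Type*} [Field L] [Finite L] [Field K] [Algebra L K] {p m e : ℕ} [IsCharPow K p]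
  (hL : Nat.card L = p ^ m) (ψ : AddChar (fixedField K p 1) ℂ)

lemma traceChar_eq_one_of_pow_sub_self {z : L} {Y : K} (hY : Y ^ p - Y = algebraMap L K z)
    (hYm : Y ^ p ^ m = Y) : traceChar hL ψ z = 1 := by
  have htrace : absTrace K hL z = 0 :=
    Subtype.ext ((coe_absTrace_eq hL hY).trans (by rw [hYm, sub_self]; rfl))
  rw [traceChar_apply, htrace, AddChar.map_zero_eq_one]

variable [IsAlgClosed K] [IsCharPow L p]

lemma traceChar_pow_mul_sum_eq {g γ : ℕ → L} (hγ : ∀ i, γ i ^ p ^ i = g i) (y z : L) :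
    traceChar hL ψ (y ^ p ^ e * ∑ i ∈ range (e + 1), g i * z ^ p ^ i) =
      traceChar hL ψ (z * Rgen p e (fun i ↦ γ (e - i)) y) := by
  rw [Rgen, ← sum_range_reflect (fun i ↦ γ (e - i) * y ^ p ^ i), mul_sum, mul_sum,
    traceChar_apply, traceChar_apply, map_sum (absTrace K hL), map_sum (absTrace K hL)]
  refine congrArg ψ (sum_congr rfl fun i hi ↦ ?_)
  have hie := Nat.lt_succ_iff.1 (mem_range.1 hi)
  rw [← absTrace_pow_pow hL i (z * _), show e + 1 - 1 - i = e - i by lia, Nat.sub_sub_self hie,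
    mul_pow, mul_pow, hγ, ← pow_pow_add, Nat.sub_add_cancel hie]
  congr 1
  ring

lemma traceChar_mul_Rgen_add (a : ℕ → L) (x y : L) :
    traceChar hL ψ (x * Rgen p e a y + y * Rgen p e a x) =
      traceChar hL ψ (x ^ p ^ e * Egen p e a y) := by
  have hsplit : x * Rgen p e a y + y * Rgen p e a x = fgen p e a x y ^ p ^ 1 - fgen p e a x y +
      x ^ p ^ e * Egen p e a y := by
    rw [pow_one, fgen_pow_sub_self]
    ring
  rw [hsplit, AddChar.map_add_eq_mul, AddChar.map_sub_eq_div, traceChar_pow_pow,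
    div_self (AddChar.val_isUnit _ _).ne_zero, one_mul]

end Adjoint

section RationalDivision

variable {F : Type*} [Field F] {p e : ℕ} {b c : ℕ → F} {A : AddSubgroup F}

lemma Rpoly_eq_C_mul_of_vanishing [Finite F] (hp : 1 < p) (hA : Nat.card A = p ^ e) (hc : c e = 1)
    (hcA : ∀ x ∈ A, Rgen p e c x = 0) (hbA : ∀ x ∈ A, Rgen p e b x = 0) :
    Rpoly p e b = C (b e) * Rpoly p e c := by
  rw [← sub_eq_zero]
  refine eq_zero_of_degree_lt_card (A := A) ?_ fun x hx ↦ ?_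
  · have hdiff : Rpoly p e b - C (b e) * Rpoly p e c = (Rpoly p e b - C (b e) * X ^ p ^ e) -
        b e • (Rpoly p e c - C (c e) * X ^ p ^ e) := by
      rw [hc, smul_eq_C_mul, C_1]
      ring
    rw [hA, hdiff, ← mem_degreeLT]
    exact Submodule.sub_mem _ (mem_degreeLT.2 (degree_Rpoly_sub_lt hp))
      (Submodule.smul_mem _ _ (mem_degreeLT.2 (degree_Rpoly_sub_lt hp)))
  · rw [eval_sub, eval_mul, eval_Rpoly, eval_Rpoly, hbA x hx, hcA x hx, mul_zero, sub_zero]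

variable [IsCharPow F p]

lemma pow_pow_eq_self_of_vanishing [Finite F] {s : ℕ} (hA : Nat.card A = p ^ e) (hc : c e = 1)
    (hcA : ∀ x ∈ A, Rgen p e c x = 0) (hAs : ∀ x ∈ A, x ^ p ^ s = x) {i : ℕ} (hi : i ≤ e) :
    c i ^ p ^ s = c i := by
  have hp := IsCharPow.one_lt F p
  have hvanish (x : F) (hx : x ∈ A) : Rgen p e (fun i ↦ c i ^ p ^ s) x = 0 := by
    have hpow := map_Rgen (powHom F p s) p e c x
    rw [hcA x hx, map_zero, powHom_apply, hAs x hx] at hpow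
    exact hpow.symm
  have hpoly := Rpoly_eq_C_mul_of_vanishing hp hA hc hcA hvanish
  rw [hc, one_pow, C_1, one_mul] at hpoly
  simpa only [coeff_Rpoly hp hi] using congrArg (coeff · (p ^ i)) hpoly

variable (p e c) in
/-- The additive map `x ↦ ∑ i ≤ e, c i * x ^ p ^ i`. -/
def RgenHom : F →+ F := AddMonoidHom.mk' (Rgen p e c) (Rgen_add e c)

@[simp] lemma RgenHom_apply (x : F) : RgenHom p e c x = Rgen p e c x := rfl

lemma eq_ker_RgenHom (hA : Nat.card A = p ^ e) (hc : c e = 1)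
    (hcA : ∀ x ∈ A, Rgen p e c x = 0) : A = (RgenHom p e c).ker := by
  have hp := IsCharPow.one_lt F p
  have hdeg : (Rpoly p e c).natDegree = p ^ e := natDegree_Rgen_X hp (hc ▸ one_ne_zero)
  have hne : Rpoly p e c ≠ 0 := by
    intro h
    rw [h, natDegree_zero] at hdeg
    exact (pow_pos (zero_lt_one.trans hp) e).ne hdeg
  have hroots : (Rpoly p e c).rootSet F = (RgenHom p e c).ker := by
    ext x
    simp [mem_rootSet_of_ne hne, aeval_Rpoly]
  have hfin : Finite (RgenHom p e c).ker := by
    change Finite ((RgenHom p e c).ker : Set F)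
    rw [← hroots]
    infer_instance
  refine AddSubgroup.eq_of_le_of_card_ge hcA ?_
  rw [hA, ← hdeg]
  exact (congrArg Set.ncard hroots).symm.trans_le (ncard_rootSet_le _ _)

end RationalDivision

lemma card_comap_algebraMap {L K : Type*} [Field L] [Finite L] [Field K] [IsAlgClosed K]
    [Algebra L K] {p m : ℕ} [IsCharPow K p] (hL : Nat.card L = p ^ m) {A : AddSubgroup K}
    (hA : ∀ x ∈ A, x ^ p ^ m = x) :
    Nat.card (A.comap (algebraMap L K).toAddMonoidHom) = Nat.card A := by
  have hmap : (A.comap (algebraMap L K).toAddMonoidHom).map (algebraMap L K).toAddMonoidHom = A :=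
    AddSubgroup.map_comap_eq_self fun x hx ↦ exists_algebraMap_eq hL (hA x hx)
  rw [← AddSubgroup.card_map_of_injective (f := (algebraMap L K).toAddMonoidHom)
    (algebraMap L K).injective, hmap]

section Division

variable {L K : Type*} [Field L] [Field K] [Algebra L K] {p m e : ℕ} {a c g : ℕ → L}
  {A : AddSubgroup K}

lemma Egen_eq_sum_of_Epoly_eq_sum
    (hg : Epoly p e a = ∑ j ∈ range (e + 1), C (g j) * Rpoly p e c ^ p ^ j) (x : K) :
    Egen p e (fun i ↦ algebraMap L K (a i)) x = ∑ j ∈ range (e + 1),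
      algebraMap L K (g j) * Rgen p e (fun i ↦ algebraMap L K (c i)) x ^ p ^ j := by
  simpa [aeval_Epoly, aeval_Rpoly] using congrArg (aeval x) hg

variable [IsAlgClosed K] [IsCharPow K p]

lemma exists_Rgen_eq {b : ℕ → K} (hbe : b e ≠ 0) (z : K) : ∃ x, Rgen p e b x = z := by
  have hp := IsCharPow.one_lt K p
  have hdeg : (Rpoly p e b - C z).natDegree = p ^ e :=
    natDegree_sub_C.trans (natDegree_Rgen_X hp hbe)
  obtain ⟨x, hx⟩ := IsAlgClosed.exists_root (Rpoly p e b - C z) fun h ↦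
    (pow_pos (zero_lt_one.trans hp) e).ne' (hdeg.symm.trans (natDegree_eq_of_degree_eq_some h))
  exact ⟨x, by simpa [eval_Rpoly, sub_eq_zero] using hx⟩

variable [Finite L] (hL : Nat.card L = p ^ m)
include hL

lemma pow_sub_mem_ker_RgenHom {x : K} {z : L}
    (hx : Rgen p e (fun i ↦ algebraMap L K (c i)) x = algebraMap L K z) :
    x ^ p ^ m - x ∈ (RgenHom p e fun i ↦ algebraMap L K (c i)).ker := by
  have hfix (y : L) : algebraMap L K y ^ p ^ m = algebraMap L K y :=
    (mem_range_algebraMap_iff hL).1 ⟨y, rfl⟩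
  rw [AddMonoidHom.mem_ker, map_sub, RgenHom_apply, RgenHom_apply,
    ← Rgen_pow (fun i _ ↦ hfix (c i)), hx, hfix, sub_self]

variable (hA : IsLagrangian p e (fun i ↦ algebraMap L K (a i)) A) (hc : c e = 1)
  (hAc : A = (RgenHom p e fun i ↦ algebraMap L K (c i)).ker)
  (hg : Epoly p e a = ∑ j ∈ range (e + 1), C (g j) * Rpoly p e c ^ p ^ j)
include hA hc hAc hg

/-- If `P x = z` then `ω b x` solves `Y ^ p - Y = -b ^ p ^ e * E x`, and it is rational because
`x ^ p ^ m - x` lies in the isotropic subgroup `A`. -/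
lemma traceChar_pow_mul_sum_eq_one (ψ : AddChar (fixedField K p 1) ℂ) {b : L}
    (hb : algebraMap L K b ∈ A) (z : L) :
    traceChar hL ψ (b ^ p ^ e * ∑ j ∈ range (e + 1), g j * z ^ p ^ j) = 1 := by
  obtain ⟨x, hx⟩ := exists_Rgen_eq (p := p) (e := e) (b := fun i ↦ algebraMap L K (c i))
    (by simp [hc]) (algebraMap L K z)
  have hfix (y : L) : algebraMap L K y ^ p ^ m = algebraMap L K y :=
    (mem_range_algebraMap_iff hL).1 ⟨y, rfl⟩
  have hEb := hA.le_ker hb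
  rw [AddMonoidHom.mem_ker, EgenHom_apply] at hEb
  refine traceChar_eq_one_of_pow_sub_self hL ψ
    (Y := omegaHom p e (fun i ↦ algebraMap L K (a i)) x (algebraMap L K b)) ?_ ?_
  · rw [omegaHom_pow_sub_self, hEb, mul_zero, sub_zero, Egen_eq_sum_of_Epoly_eq_sum hg, hx]
    simp
  · have hmem : x ^ p ^ m - x ∈ A := hAc ▸ pow_sub_mem_ker_RgenHom hL hx
    rw [omegaHom_pow (fun i ↦ hfix (a i)), hfix, ← sub_eq_zero, ← AddMonoidHom.sub_apply, ← map_sub,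
      hA.omegaHom_eq_zero hmem hb]

/-- With `Γ` the adjoint of `z ↦ ∑ g j * z ^ p ^ j`, the left side is `χ (Γ x * P y)`; as `Γ`
vanishes on `A` it equals `g 0 * P`. -/
theorem traceChar_mul_Rgen_add_eq [IsCharPow L p] (hAm : ∀ x ∈ A, x ^ p ^ m = x)
    (hcard : Nat.card A = p ^ e) {ψ : AddChar (fixedField K p 1) ℂ} (hψ : ψ ≠ 0) (x y : L) :
    traceChar hL ψ (x * Rgen p e a y + y * Rgen p e a x) =
      traceChar hL ψ (g 0 * Rgen p e c x * Rgen p e c y) := by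
  have hfrob (i : ℕ) : Function.Surjective (powHom L p i) :=
    Finite.surjective_of_injective (powHom L p i).injective
  choose γ hγ using fun i ↦ hfrob i (g i)
  have hAL := (card_comap_algebraMap hL hAm).trans hcard
  have hΓA (b : L) (hb : b ∈ A.comap (algebraMap L K).toAddMonoidHom) :
      Rgen p e (fun i ↦ γ (e - i)) b = 0 := by
    refine eq_zero_of_forall_mul_eq_one (traceChar_ne_zero hL hψ) fun z ↦ ?_
    rw [mul_comm, ← traceChar_pow_mul_sum_eq hL ψ hγ]
    exact traceChar_pow_mul_sum_eq_one hL hA hc hAc hg ψ hb z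
  have hcA (b : L) (hb : b ∈ A.comap (algebraMap L K).toAddMonoidHom) : Rgen p e c b = 0 := by
    rw [AddSubgroup.mem_comap, hAc, AddMonoidHom.mem_ker] at hb
    exact (algebraMap L K).injective (by simpa [map_Rgen] using hb)
  have hΓ : Rgen p e (fun i ↦ γ (e - i)) x = g 0 * Rgen p e c x := by
    have hpoly := Rpoly_eq_C_mul_of_vanishing (IsCharPow.one_lt L p) hAL hc hcA hΓA
    have hγ0 : γ 0 = g 0 := by simpa using hγ 0
    simpa [eval_Rpoly, hγ0] using congrArg (eval x) hpoly
  have hE : Egen p e a y = ∑ j ∈ range (e + 1), g j * Rgen p e c y ^ p ^ j := by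
    simpa using Egen_eq_sum_of_Epoly_eq_sum (K := L) hg y
  rw [traceChar_mul_Rgen_add, hE, traceChar_pow_mul_sum_eq hL ψ hγ, hΓ, mul_comm]

end Division

section QuadraticSums

variable {L : Type*} [Field L]

/-- The pairing `(x, y) ↦ χ (c * x * y)`. -/
def mulPairing (χ : AddChar L ℂ) (c : L) : Pairing L :=
  Pairing.ofBiadditive (AddMonoidHom.mul.comp (AddMonoidHom.mulLeft c)) χ

@[simp] lemma mulPairing_apply (χ : AddChar L ℂ) (c x y : L) :
    mulPairing χ c x y = χ (c * x * y) := rfl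

lemma mulPairing_comm (χ : AddChar L ℂ) (c x y : L) :
    mulPairing χ c x y = mulPairing χ c y x := by
  rw [mulPairing_apply, mulPairing_apply, mul_right_comm]

lemma isQuadratic_addChar_mul_sq (χ : AddChar L ℂ) (d : L) :
    (mulPairing χ (2 * d)).IsQuadratic fun z ↦ χ (d * z ^ 2) := by
  intro x y
  rw [mulPairing_apply, ← χ.map_add_eq_mul, ← χ.map_add_eq_mul]
  exact congrArg χ (by ring)

variable {χ : AddChar L ℂ} {d : L}

lemma injective_mulPairing (hχ : χ ≠ 0) (hd : d ≠ 0) : Function.Injective (mulPairing χ d) := by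
  rw [← AddMonoidHom.ker_eq_bot_iff, AddSubgroup.eq_bot_iff_forall]
  intro x hx
  refine (mul_eq_zero.1 (eq_zero_of_forall_mul_eq_one hχ fun z ↦ ?_)).resolve_left hd
  exact DFunLike.congr_fun (AddMonoidHom.mem_ker.1 hx) z

variable {p s t r : ℕ} [IsCharPow L p]

/-- The subgroup `{z | z ^ p ^ t = c * z}`. -/
def frobEigen (p t : ℕ) [IsCharPow L p] (c : L) : AddSubgroup L :=
  (powHom L p t).toAddMonoidHom.eqLocus (AddMonoidHom.mulLeft c)

lemma mem_frobEigen {c z : L} : z ∈ frobEigen p t c ↔ z ^ p ^ t = c * z := Iff.rfl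

lemma two_pow_pow (i : ℕ) : (2 : L) ^ p ^ i = 2 := map_ofNat (powHom L p i) 2

lemma pow_eq_self_of_forall_mul_eq_one [Finite L] (hχ : χ ≠ 0)
    (hχs : ∀ z, χ (z ^ p ^ s) = χ z) {c : L} (hc : ∀ z, χ (c * (z ^ p ^ s - z)) = 1) :
    c ^ p ^ s = c := by
  refine (sub_eq_zero.1 (eq_zero_of_forall_mul_eq_one hχ fun z ↦ ?_)).symm
  obtain ⟨w, rfl⟩ := Finite.surjective_of_injective (powHom L p s).injective z
  rw [powHom_apply, sub_mul, χ.map_sub_eq_div, ← mul_pow, hχs, ← χ.map_sub_eq_div, ← mul_sub, hc]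

variable [NeZero (2 : L)]

section Gauss

variable (hχt : ∀ z, χ (z ^ p ^ t) = χ z)
include hχt

lemma addChar_eq_one_of_pow_eq_neg {w : L} (hw : w ^ p ^ t = -w) : χ w = 1 := by
  have hhalf : (w / 2) ^ p ^ t = -(w / 2) := by rw [div_pow, hw, two_pow_pow, neg_div]
  have hneg := hχt (w / 2)
  rw [hhalf] at hneg
  rw [← add_halves w, χ.map_add_eq_mul]
  nth_rw 1 [← hneg]
  rw [← χ.map_add_eq_mul, neg_add_cancel, χ.map_zero_eq_one]

variable (hd : d ≠ 0) (hdt : d ^ p ^ t = d) {i : L} (hi : i ^ 2 = -1)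
include hdt hi

lemma addChar_mul_eq_one_of_mem_frobEigen {u v : L} (hu : u ∈ frobEigen p t (-i))
    (hv : v ∈ frobEigen p t (-i)) : χ (d * u * v) = 1 := by
  refine addChar_eq_one_of_pow_eq_neg hχt ?_
  rw [mul_pow, mul_pow, hdt, mem_frobEigen.1 hu, mem_frobEigen.1 hv]
  linear_combination d * u * v * hi

include hd in
lemma perp_frobEigen (hχ : χ ≠ 0) (hit : i ^ p ^ t = -i) (hL : ∀ z : L, (z ^ p ^ t) ^ p ^ t = z) :
    (mulPairing χ d).perp (frobEigen p t (-i)) = frobEigen p t (-i) := by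
  refine le_antisymm (fun y hy ↦ ?_)
    fun y hy x hx ↦ addChar_mul_eq_one_of_mem_frobEigen hχt hdt hi hx hy
  have hzero : y - i * y ^ p ^ t = 0 := by
    refine eq_zero_of_forall_mul_eq_one (χ := χ) hχ fun z ↦ ?_
    have hmem : d⁻¹ * (z + i * z ^ p ^ t) ∈ frobEigen p t (-i) := by
      rw [mem_frobEigen, mul_pow, inv_pow, hdt, add_pow_pow, mul_pow, hL, hit]
      linear_combination d⁻¹ * z ^ p ^ t * hi
    have hone := hy _ hmem
    have hpow : (i * z ^ p ^ t * y) ^ p ^ t = -(i * z * y ^ p ^ t) := by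
      rw [mul_pow, mul_pow, hL, hit]
      ring
    rw [mulPairing_apply, mul_inv_cancel_left₀ hd, add_mul, χ.map_add_eq_mul, ← hχt (i * _ * y),
      hpow, ← χ.map_add_eq_mul] at hone
    rw [← hone]
    exact congrArg χ (by ring)
  rw [mem_frobEigen]
  linear_combination i * hzero + y ^ p ^ t * hi

end Gauss

/-- In characteristic `≡ 3 mod 4` the subgroup `{z | z ^ Q = -i * z}`, with `i ^ 2 = -1`, is a
Lagrangian on which the quadratic form vanishes. -/
theorem sum_addChar_mul_sq_eq [Fintype L] (hL : Nat.card L = p ^ (2 * t)) (ht : p ^ t % 4 = 3)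
    (hχ : χ ≠ 0) (hχt : ∀ z, χ (z ^ p ^ t) = χ z) (hd : d ≠ 0) (hdt : d ^ p ^ t = d) :
    ∑ z, χ (d * z ^ 2) = p ^ t := by
  rw [Nat.card_eq_fintype_card, mul_comm, pow_mul] at hL
  have hiter (z : L) : (z ^ p ^ t) ^ p ^ t = z := by
    rw [← pow_mul, ← sq, ← hL, FiniteField.pow_card]
  obtain ⟨i, hi⟩ : IsSquare (-1 : L) := by
    rw [FiniteField.isSquare_neg_one_iff, hL, Nat.pow_mod, ht]
    norm_num
  rw [← sq, eq_comm] at hi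
  have hit : i ^ p ^ t = -i := by
    rw [← Nat.div_add_mod (p ^ t) 4, ht, pow_add, pow_mul, show i ^ 4 = 1 by
      linear_combination (i ^ 2 - 1) * hi, one_pow]
    linear_combination i * hi
  have hperp := perp_frobEigen hχt (mul_ne_zero two_ne_zero hd)
    (by rw [mul_pow, two_pow_pow, hdt]) hi hχ hit hiter
  have hcard := Pairing.card_mul_card_perp_of_injective _
    (injective_mulPairing hχ (mul_ne_zero two_ne_zero hd)) (frobEigen p t (-i))
  rw [hperp, Nat.card_eq_fintype_card (α := L), hL, sq, Nat.mul_self_inj] at hcard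
  rw [(isQuadratic_addChar_mul_sq χ d).sum_eq_card_of_perp_eq (fun u hu ↦ ?_) hperp, hcard,
    Nat.cast_pow]
  rw [sq, ← mul_assoc]
  exact addChar_mul_eq_one_of_mem_frobEigen hχt hdt hi hu hu

/-- The complement of the range of `P` consists of `y` with `y ^ p ^ s = y`, on which the quadratic
form vanishes, so averaging over it restricts the sum to the range. -/
theorem sum_addChar_mul_sq_comp_eq [Fintype L] (hχ : χ ≠ 0) (hχs : ∀ z, χ (z ^ p ^ s) = χ z)
    (hχfix : ∀ z, z ^ p ^ s = z → χ z = 1) (hd : d ≠ 0) (hds : d ^ p ^ s = d) {P : L →+ L}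
    (hP : ∀ z, z ^ p ^ s - z ∈ P.range) :
    ∑ x, χ (d * P x ^ 2) = Nat.card P.ker * ∑ z, χ (d * z ^ 2) := by
  classical
  have h2d : 2 * d ≠ 0 := mul_ne_zero two_ne_zero hd
  have hperp : (mulPairing χ (2 * d)).perp ((mulPairing χ (2 * d)).perp P.range) = P.range :=
    Pairing.perp_perp _ (injective_mulPairing hχ h2d) (mulPairing_comm χ _) _
  have hfix (y : L) (hy : y ∈ (mulPairing χ (2 * d)).perp P.range) : y ^ p ^ s = y := by
    have h := pow_eq_self_of_forall_mul_eq_one hχ hχs (c := 2 * d * y) fun z ↦ by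
      rw [mul_right_comm]
      exact hy _ (hP z)
    rw [mul_pow, mul_pow, two_pow_pow, hds] at h
    exact mul_left_cancel₀ h2d h
  rw [sum_comp_addMonoidHom P fun z ↦ χ (d * z ^ 2),
    (isQuadratic_addChar_mul_sq χ d).sum_eq_sum_perp (U := (mulPairing χ (2 * d)).perp P.range)
      fun y hy ↦ hχfix _ (by rw [mul_pow, hds, pow_right_comm, hfix y hy])]
  simp only [hperp]

end QuadraticSums

lemma card_fixedField_of_dvd {L : Type*} (K : Type*) [Field L] [Finite L] [Field K] [IsAlgClosed K]
    [Algebra L K] {p m i : ℕ} [IsCharPow L p] [IsCharPow K p] (hL : Nat.card L = p ^ m)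
    (hi : 0 < i) (him : i ∣ m) : Nat.card (fixedField L p i) = p ^ i := by
  obtain ⟨r, rfl⟩ := him
  have hcomap : (fixedField K p i).toAddSubgroup.comap (algebraMap L K).toAddMonoidHom =
      (fixedField L p i).toAddSubgroup := by
    ext x
    change algebraMap L K x ^ p ^ i = algebraMap L K x ↔ x ^ p ^ i = x
    rw [← map_pow, (algebraMap L K).injective.eq_iff]
  have hcard := card_comap_algebraMap (K := K) hL (A := (fixedField K p i).toAddSubgroup)
    fun x hx ↦ pow_pow_mul_eq_self hx r
  rw [hcomap] at hcard
  exact hcard.trans (card_fixedField hi)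

section OddCharacteristic

variable {L K : Type*} [Field L] [Field K] [IsAlgClosed K] [Algebra L K]
  {p s e : ℕ} [IsCharPow K p] [IsCharPow L p] {a c g : ℕ → L} {A : AddSubgroup K}

/-- If `P x = z` then `x ^ p ^ s - x` lies in `L`, because `x ^ p ^ m - x` lies in `A`. -/
lemma pow_sub_mem_range_RgenHom [Finite L] {m : ℕ} (hL : Nat.card L = p ^ m) (hc : c e = 1)
    (hcs : ∀ i ≤ e, c i ^ p ^ s = c i)
    (hAs : ∀ x ∈ (RgenHom p e fun i ↦ algebraMap L K (c i)).ker, x ^ p ^ s = x) (z : L) :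
    z ^ p ^ s - z ∈ (RgenHom p e c).range := by
  obtain ⟨x, hx⟩ := exists_Rgen_eq (p := p) (e := e) (b := fun i ↦ algebraMap L K (c i))
    (by simp [hc]) (algebraMap L K z)
  have hb := hAs _ (pow_sub_mem_ker_RgenHom hL hx)
  obtain ⟨t, ht⟩ := exists_algebraMap_eq hL (x := x ^ p ^ s - x) <| by
    rw [sub_pow_pow] at hb ⊢
    rw [pow_right_comm]
    linear_combination hb
  refine ⟨t, (algebraMap L K).injective ?_⟩
  rw [RgenHom_apply, map_Rgen, ht, ← RgenHom_apply (p := p), map_sub, RgenHom_apply, RgenHom_apply,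
    ← Rgen_pow (fun i hi ↦ by rw [← map_pow, hcs i hi]), hx, map_sub, map_pow]

/-- A factorization `E = ∑ g j * P ^ p ^ j`, where `P = ∑ c i * X ^ p ^ i` is monic with kernel `A`
and its coefficients lie in the field with `p ^ s` elements. -/
structure IsRationalFactorization (p e s : ℕ) [IsCharPow K p] (a c g : ℕ → L) (A : AddSubgroup K) :
    Prop where
  monic : c e = 1
  eq_ker : A = (RgenHom p e fun i ↦ algebraMap L K (c i)).ker
  pow_pow_eq_self : ∀ i ≤ e, c i ^ p ^ s = c i
  Epoly_eq : Epoly p e a = ∑ j ∈ range (e + 1), C (g j) * Rpoly p e c ^ p ^ j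

section

variable [Finite L] {m : ℕ} (hL : Nat.card L = p ^ m)
include hL

theorem exists_isRationalFactorization
    (hA : IsLagrangian p e (fun i ↦ algebraMap L K (a i)) A) (hcard : Nat.card A = p ^ e)
    (hAm : ∀ x ∈ A, x ^ p ^ m = x) (hAs : ∀ x ∈ A, x ^ p ^ s = x) :
    ∃ c g : ℕ → L, IsRationalFactorization p e s a c g A := by
  set AL := A.comap (algebraMap L K).toAddMonoidHom with hALdef
  have hAL : Nat.card AL = p ^ e := (card_comap_algebraMap hL hAm).trans hcard
  have hALs (x : L) (hx : x ∈ AL) : x ^ p ^ s = x :=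
    (algebraMap L K).injective (by simpa using hAs _ hx)
  have hk : Nat.card (fixedField L p 1) = p := by
    rw [card_fixedField_of_dvd K hL one_pos (one_dvd m), pow_one]
  obtain ⟨c, hc, hcA⟩ := exists_monic_Rgen_vanishing hk hAL fun t ht x hx ↦ by
    have hmem := hA.smul_mem (c := algebraMap L K t) (by rw [← map_pow, ht]) hx
    simpa [hALdef] using hmem
  obtain ⟨g, hg⟩ := exists_Epoly_eq_sum (a := a) hAL hc hcA fun x hx ↦
    (algebraMap L K).injective (by simpa [map_Egen] using hA.le_ker hx)
  refine ⟨c, g, hc, eq_ker_RgenHom hcard (by simp [hc]) fun x hx ↦ ?_,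
    fun i hi ↦ pow_pow_eq_self_of_vanishing hAL hc hcA hALs hi, hg⟩
  obtain ⟨y, rfl⟩ := exists_algebraMap_eq hL (hAm x hx)
  rw [← map_Rgen, hcA y hx, map_zero]

lemma IsRationalFactorization.card_ker (h : IsRationalFactorization p e s a c g A)
    (hAm : ∀ x ∈ A, x ^ p ^ m = x) : Nat.card (RgenHom p e c).ker = Nat.card A := by
  rw [← card_comap_algebraMap hL hAm, h.eq_ker]
  congr 2
  ext x
  simp [← map_Rgen]

/-- Polarize at `(x / 2, x)`. -/
lemma traceChar_mul_Rgen_eq_mul_sq [NeZero (2 : L)]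
    (hA : IsLagrangian p e (fun i ↦ algebraMap L K (a i)) A)
    (h : IsRationalFactorization p e s a c g A) (hcard : Nat.card A = p ^ e)
    (hAm : ∀ x ∈ A, x ^ p ^ m = x) {ψ : AddChar (fixedField K p 1) ℂ} (hψ : ψ ≠ 0) (x : L) :
    traceChar hL ψ (x * Rgen p e a x) = traceChar hL ψ (g 0 / 2 * Rgen p e c x ^ 2) := by
  have hhalf : (2⁻¹ : L) ^ p = 2⁻¹ := by
    rw [inv_pow]
    simpa using congrArg Inv.inv (two_pow_pow (L := L) (p := p) 1)
  have hpolar := traceChar_mul_Rgen_add_eq hL hA h.monic h.eq_ker h.Epoly_eq hAm hcard hψ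
    (2⁻¹ * x) x
  rw [Rgen_smul hhalf, Rgen_smul hhalf] at hpolar
  convert hpolar using 2
  · linear_combination (-(x * Rgen p e a x)) * mul_inv_cancel₀ (two_ne_zero (α := L))
  · ring

end

theorem sum_traceChar_mul_Rgen_eq [Fintype L] [NeZero (2 : L)] {r : ℕ}
    (hL : Nat.card L = p ^ (2 * (s * r))) (hr : (r : K) = 0) (hmod : p ^ (s * r) % 4 = 3)
    (hae : a e ≠ 0) (ha : ∀ i, a i ^ p ^ s = a i)
    (hA : IsLagrangian p e (fun i ↦ algebraMap L K (a i)) A) (hAs : ∀ x ∈ A, x ^ p ^ s = x)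
    {ψ : AddChar (fixedField K p 1) ℂ} (hψ : ψ ≠ 0) :
    ∑ x, traceChar hL ψ (x * Rgen p e a x) = p ^ e * p ^ (s * r) := by
  have hm : 2 * (s * r) = s * (2 * r) := by ring
  have h2K : (2 : K) ≠ 0 := by
    rw [← map_ofNat (algebraMap L K) 2]
    exact (_root_.map_ne_zero _).2 two_ne_zero
  have hcard : Nat.card A = p ^ e := hA.card_eq (by simpa using hae) fun _ ↦ h2K
  have hAm (x : K) (hx : x ∈ A) : x ^ p ^ (2 * (s * r)) = x :=
    hm ▸ pow_pow_mul_eq_self (hAs x hx) (2 * r)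
  obtain ⟨c, g, h⟩ := exists_isRationalFactorization hL hA hcard hAm hAs
  set d := g 0 / 2
  have hd : d ≠ 0 := div_ne_zero (ne_zero_of_Epoly_eq_sum h.Epoly_eq hae fun _ ↦ two_ne_zero)
    two_ne_zero
  have hds : d ^ p ^ s = d := by
    rw [div_pow, two_pow_pow, pow_pow_eq_self_of_Epoly_eq_sum h.Epoly_eq hae
      (fun _ ↦ two_ne_zero) ha h.pow_pow_eq_self]
  simp only [traceChar_mul_Rgen_eq_mul_sq hL hA h hcard hAm hψ]
  have hχ := traceChar_ne_zero hL hψ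
  have hsum := sum_addChar_mul_sq_comp_eq hχ (traceChar_pow_pow hL ψ s) (fun z hz ↦ ?_) hd hds
    (pow_sub_mem_range_RgenHom hL h.monic h.pow_pow_eq_self (h.eq_ker ▸ hAs))
  · simp only [RgenHom_apply] at hsum
    rw [hsum, h.card_ker hL hAm, hcard, sum_addChar_mul_sq_eq hL hmod hχ
      (traceChar_pow_pow hL ψ _) hd (pow_pow_mul_eq_self hds r), Nat.cast_pow]
  · exact traceChar_eq_one_of_pow_eq_self hL ψ hm (by rw [Nat.cast_mul, hr, mul_zero]) hz

end OddCharacteristic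

section FrobeniusOnKernel

variable {K : Type*} [Field K] {p e s : ℕ} [IsCharPow K p] {a : ℕ → K} {A : AddSubgroup K}

lemma frobSub_mem_ker_EgenHom (ha : ∀ i, a i ^ p ^ s = a i) {v : K}
    (hv : v ∈ (EgenHom p e a).ker) : frobSub K p s v ∈ (EgenHom p e a).ker := by
  rw [AddMonoidHom.mem_ker, EgenHom_apply] at hv ⊢
  rw [frobSub_apply, Egen_sub, ← Egen_pow ha, hv, sub_zero]
  exact map_zero (powHom K p s)

lemma omegaHom_pow_pow_eq_self {x y : K} (hx : x ∈ (EgenHom p e a).ker)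
    (hy : y ∈ (EgenHom p e a).ker) (i : ℕ) : omegaHom p e a x y ^ p ^ i = omegaHom p e a x y :=
  pow_pow_eq_self (mem_fixedField_one.1 (omegaHom_mem_fixedField hx hy)) i

lemma exists_artinSchreier_lift (ha : ∀ i, a i ^ p ^ s = a i) {v x Y : K}
    (hv : v ∈ (EgenHom p e a).ker) (hx : x ^ p ^ s = x + v) (hY : Y ^ p - Y = x * Rgen p e a x) :
    ∃ b, b ^ p - b = v * Rgen p e a v ∧ Y ^ p ^ s = Y + fgen p e a x v + b := by
  have hf := fgen_pow_sub_self (p := p) e a x v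
  have hYs : (Y ^ p ^ s) ^ p - Y ^ p ^ s = (x + v) * Rgen p e a (x + v) := by
    rw [← hx, ← Rgen_pow fun i _ ↦ ha i, ← mul_pow, ← hY, sub_pow_pow, ← pow_mul, ← pow_mul,
      mul_comm]
  rw [AddMonoidHom.mem_ker, EgenHom_apply] at hv
  rw [hv] at hf
  rw [Rgen_add] at hYs
  refine ⟨Y ^ p ^ s - Y - fgen p e a x v, ?_, by ring⟩
  rw [sub_pow_self, sub_pow_self]
  linear_combination hYs - hY - hf

namespace IsRationalLagrangian

lemma frobSub_mem (hA : IsRationalLagrangian p e s a A) (ha : ∀ i, a i ^ p ^ s = a i) {v : K}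
    (hv : v ∈ (EgenHom p e a).ker) : frobSub K p s v ∈ A := by
  refine (hA.mem_iff _ (frobSub_mem_ker_EgenHom ha hv)).2 fun x hx ↦ ?_
  have hω := omegaHom_pow_pow_eq_self (hA.le_ker hx) hv s
  rw [omegaHom_pow ha, hA.pow_eq_self x hx] at hω
  rw [frobSub_apply, map_sub, hω, sub_self]

variable [CharP K 2]

lemma pow_mul_two_eq_self (hA : IsRationalLagrangian p e s a A) (ha : ∀ i, a i ^ p ^ s = a i)
    {v : K} (hv : v ∈ (EgenHom p e a).ker) : v ^ p ^ (s * 2) = v := by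
  have hfix := hA.pow_eq_self _ (hA.frobSub_mem ha hv)
  rw [frobSub_apply, sub_pow_pow, ← pow_pow_add, ← mul_two] at hfix
  linear_combination hfix + (v ^ p ^ s - v) * CharTwo.two_eq_zero (R := K)

lemma lift_pow_mul_two_eq (hA : IsRationalLagrangian p e s a A) (ha : ∀ i, a i ^ p ^ s = a i)
    {v b : K} (hv : v ∈ (EgenHom p e a).ker) (hb : b ^ p - b = v * Rgen p e a v) :
    b ^ p ^ (s * 2) = b + fgen p e a (frobSub K p s v) (frobSub K p s v) := by
  have hu := hA.frobSub_mem ha hv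
  set u := frobSub K p s v with hu_def
  have hvu : v ^ p ^ s = v + u := by rw [hu_def, frobSub_apply]; ring
  obtain ⟨b', hb', hbs⟩ := exists_artinSchreier_lift ha (hA.le_ker hu) hvu hb
  rw [mul_two, pow_pow_add, hbs, add_pow_pow, add_pow_pow, hbs, fgen_pow ha, hvu,
    hA.pow_eq_self u hu, hA.lift_pow_eq_self u hu b' hb', fgen_add_left]
  linear_combination (fgen p e a v u + b') * CharTwo.two_eq_zero (R := K)

/-- With `σ` the `p ^ (s * 2)`-power map, `σ Y = Y + f(x, v) + b` and `σ b = b + f(u, u)` where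
`u = v ^ p ^ s - v`, so that `σ (σ Y)` can be computed. -/
theorem pow_mul_two_mul_two_sub_eq (hA : IsRationalLagrangian p e s a A)
    (ha : ∀ i, a i ^ p ^ s = a i) {x Y : K} (hv : frobSub K p (s * 2) x ∈ (EgenHom p e a).ker)
    (hY : Y ^ p - Y = x * Rgen p e a x) :
    Y ^ p ^ (s * 2 * 2) - Y =
      fgen p e a (frobSub K p (s * 2) x) (frobSub K p (s * 2) x) +
        fgen p e a (frobSub K p s (frobSub K p (s * 2) x))
          (frobSub K p s (frobSub K p (s * 2) x)) := by
  have ha2 (i : ℕ) : a i ^ p ^ (s * 2) = a i := pow_pow_mul_eq_self (ha i) 2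
  set v := frobSub K p (s * 2) x with hv_def
  have hxv : x ^ p ^ (s * 2) = x + v := by rw [hv_def, frobSub_apply]; ring
  obtain ⟨b, hb, hYs⟩ := exists_artinSchreier_lift ha2 hv hxv hY
  rw [mul_two (s * 2), pow_pow_add, hYs, add_pow_pow, add_pow_pow, hYs, fgen_pow ha2, hxv,
    hA.pow_mul_two_eq_self ha hv, hA.lift_pow_mul_two_eq ha hv hb, fgen_add_left]
  linear_combination (fgen p e a x v + b) * CharTwo.two_eq_zero (R := K)

end IsRationalLagrangian

end FrobeniusOnKernel

section DiagonalForm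

variable {K : Type*} [Field K] [CharP K 2] {p e s : ℕ} [IsCharPow K p] {a : ℕ → K}

lemma fgen_self_mem_fixedField {v : K} (hv : v ∈ (EgenHom p e a).ker) :
    fgen p e a v v ∈ fixedField K p 1 := by
  have hf := fgen_self_pow_sub_self (p := p) e a v
  rw [AddMonoidHom.mem_ker, EgenHom_apply] at hv
  rwa [hv, mul_zero, sub_eq_zero, ← mem_fixedField_one] at hf

variable (p e a) in
/-- The quadratic form `v ↦ f_R(v, v)` on `V_R` in characteristic two; its polar form is the
commutator form. -/
def diagV (v : (EgenHom p e a).ker) : fixedField K p 1 :=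
  ⟨fgen p e a v v, fgen_self_mem_fixedField v.2⟩

lemma diagV_add (u v : (EgenHom p e a).ker) :
    diagV p e a (u + v) = diagV p e a u + diagV p e a v + omegaV p e a u v := by
  refine Subtype.ext ?_
  change fgen p e a (u + v : K) (u + v) =
    fgen p e a u u + fgen p e a v v + omegaHom p e a (u : K) v
  rw [fgen_add_left, fgen_add_right, fgen_add_right, omegaHom_apply]
  linear_combination fgen p e a (v : K) u * CharTwo.two_eq_zero (R := K)

/-- The map `v ↦ v ^ p ^ s - v` on `V_R`. -/
def frobV (ha : ∀ i, a i ^ p ^ s = a i) : (EgenHom p e a).ker →+ (EgenHom p e a).ker :=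
  ((frobSub K p s).comp (EgenHom p e a).ker.subtype).codRestrict _
    fun v ↦ frobSub_mem_ker_EgenHom ha v.2

omit [CharP K 2] in
lemma coe_frobV (ha : ∀ i, a i ^ p ^ s = a i) (v : (EgenHom p e a).ker) :
    (frobV ha v : K) = frobSub K p s v := rfl

lemma diagV_frobV (ha : ∀ i, a i ^ p ^ s = a i) (v : (EgenHom p e a).ker) :
    diagV p e a (frobV ha v) = omegaV p e a v (frobV ha v) := by
  refine Subtype.ext ?_
  have hfix := pow_pow_eq_self (mem_fixedField_one.1 (fgen_self_mem_fixedField v.2)) s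
  rw [fgen_pow ha] at hfix
  change fgen p e a (frobSub K p s v) (frobSub K p s v) = omegaHom p e a (v : K) (frobSub K p s v)
  obtain ⟨w, hw⟩ : ∃ w, w = (v : K) ^ p ^ s := ⟨_, rfl⟩
  have hsub : frobSub K p s (v : K) = w + v := by rw [frobSub_apply, CharTwo.sub_eq_add, hw]
  rw [← hw] at hfix
  simp only [hsub, omegaHom_apply, fgen_add_left, fgen_add_right]
  linear_combination hfix + (fgen p e a w v + fgen p e a (v : K) v) * CharTwo.two_eq_zero (R := K)

lemma omegaV_frobV {A : AddSubgroup K} (hA : IsRationalLagrangian p e s a A)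
    (ha : ∀ i, a i ^ p ^ s = a i) (u v : (EgenHom p e a).ker) :
    omegaV p e a (frobV ha u) v = omegaV p e a u (frobV ha v) := by
  refine Subtype.ext ?_
  have hus : (u : K) ^ p ^ s ∈ (EgenHom p e a).ker := by
    simpa using add_mem (frobSub_mem_ker_EgenHom ha u.2) u.2
  have hω := omegaHom_pow_pow_eq_self hus v.2 s
  rw [omegaHom_pow ha, ← pow_pow_add, ← mul_two, hA.pow_mul_two_eq_self ha u.2] at hω
  rw [coe_omegaV, coe_omegaV, coe_frobV, coe_frobV, frobSub_apply, frobSub_apply, map_sub,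
    AddMonoidHom.sub_apply, map_sub, hω]

end DiagonalForm

/-- The fibre over zero does not contribute to `∑ v, (ψ (f v) - 1)`. -/
lemma sum_addChar_comp_eq_of_card_fiber_eq {X k : Type*} [Fintype X] [AddCommGroup k] [Fintype k]
    [DecidableEq k] {ψ : AddChar k ℂ} (hψ : ψ ≠ 0) {f : X → k} {n : ℕ}
    (hf : ∀ c ≠ 0, #{x | f x = c} = n) :
    ∑ x, ψ (f x) = Fintype.card X - Fintype.card k * n := by
  have hfibre : ∑ x, (ψ (f x) - 1) = ∑ c, n * (ψ c - 1) := by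
    rw [← sum_fiberwise univ f]
    refine sum_congr rfl fun c _ ↦ ?_
    rw [sum_congr rfl fun x hx ↦ by rw [(mem_filter.1 hx).2], sum_const, nsmul_eq_mul]
    rcases eq_or_ne c 0 with rfl | hc
    · rw [ψ.map_zero_eq_one, sub_self, mul_zero, mul_zero]
    · rw [hf c hc]
  rw [sum_sub_distrib, ← mul_sum, sum_sub_distrib, AddChar.sum_eq_zero_of_ne_one hψ] at hfibre
  simp only [sum_const, card_univ, nsmul_eq_mul, mul_one] at hfibre
  linear_combination hfibre

lemma isSquare_of_isSquare_mul {m n : ℕ} (hm : IsSquare m) (hm0 : m ≠ 0)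
    (h : IsSquare (m * n)) : IsSquare n := by
  obtain ⟨k, rfl⟩ := hm
  obtain ⟨l, hl⟩ := h
  obtain ⟨j, rfl⟩ : k ∣ l := (Nat.pow_dvd_pow_iff two_ne_zero).1 ⟨n, by rw [sq, sq, hl]⟩
  exact ⟨j, Nat.eq_of_mul_eq_mul_left (Nat.pos_of_ne_zero hm0) (by rw [hl]; ring)⟩

section DiagonalSum

variable {K : Type*} [Field K] [IsAlgClosed K] [CharP K 2] {p e s : ℕ} [IsCharPow K p] {a : ℕ → K}
  [Fintype (EgenHom p e a).ker] {ψ : AddChar (fixedField K p 1) ℂ}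

theorem sum_diagV_eq (hae : a e ≠ 0) (he : 0 < e) (hψ : ψ ≠ 0) :
    ∑ v, ψ (diagV p e a v) = -p ^ e := by
  classical
  have := Fintype.ofFinite (fixedField K p 1)
  have hp : p ≠ 0 := (zero_lt_one.trans (IsCharPow.one_lt K p)).ne'
  have hfibre (c : fixedField K p 1) (hc : c ≠ 0) :
      p * #{v | diagV p e a v = c} = p ^ (2 * e) + p ^ e := by
    rw [← mul_ncard_fgen_self_eq hae he (coe_pow_self c) (by simpa using hc),
      ← Set.ncard_coe_finset,
      ← Set.ncard_image_of_injective _ (Subtype.val_injective (p := (· ∈ (EgenHom p e a).ker)))]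
    congr 2
    ext x
    simp [Subtype.ext_iff, diagV, and_comm]
  obtain ⟨n, hn⟩ : ∃ n : ℕ, ∀ c : fixedField K p 1, c ≠ 0 → #{v | diagV p e a v = c} = n :=
    ⟨_, fun c hc ↦ Nat.eq_of_mul_eq_mul_left (Nat.pos_of_ne_zero hp)
      ((hfibre c hc).trans (hfibre 1 one_ne_zero).symm)⟩
  have hpn := hfibre 1 one_ne_zero
  rw [hn 1 one_ne_zero] at hpn
  rw [sum_addChar_comp_eq_of_card_fiber_eq hψ hn, ← Nat.card_eq_fintype_card,
    ← Nat.card_eq_fintype_card, card_fixedField one_pos, card_ker_EgenHom hae (by lia), pow_one,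
    ← Nat.cast_mul, hpn]
  push_cast
  ring

/-- The form `f_R(v, v)` is of minus type, and adding `f_R(N v, N v)`, where `N v = v ^ q - v`,
changes its type because `|ker N|` is not a square. -/
theorem sum_diagV_add_diagV_frobV_eq {A : AddSubgroup K} (hA : IsRationalLagrangian p e s a A)
    (ha : ∀ i, a i ^ p ^ s = a i) (hae : a e ≠ 0) (he : 0 < e)
    (hker : ¬IsSquare (Nat.card (frobV ha : (EgenHom p e a).ker →+ _).ker)) (hψ : ψ ≠ 0) :
    ∑ v, ψ (diagV p e a v + diagV p e a (frobV ha v)) = p ^ e := by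
  have h2 : e = 0 → (2 : K) ≠ 0 := fun h ↦ absurd h he.ne'
  have hQ : (Pairing.ofBiadditive (omegaV p e a) ψ).IsQuadratic fun v ↦ ψ (diagV p e a v) :=
    fun u v ↦ by simp only [diagV_add, ψ.map_add_eq_mul, Pairing.ofBiadditive_apply]
  have hsq : ¬IsSquare (Nat.card (EgenHom p e a).ker * Nat.card (frobV (e := e) ha).ker) := by
    have hp : p ≠ 0 := (zero_lt_one.trans (IsCharPow.one_lt K p)).ne'
    rw [card_ker_EgenHom hae h2]
    exact fun h ↦ hker (isSquare_of_isSquare_mul ⟨p ^ e, by ring⟩ (pow_ne_zero _ hp) h)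
  have hsum := hQ.sum_mul_eq_neg_sum (N := frobV ha)
    (fun u v ↦ congrArg ψ (omegaV_frobV hA ha u v))
    (fun u ↦ Subtype.ext (CharTwo.add_self_eq_zero (u : K)))
    (fun u ↦ by
      have hself : omegaV p e a u u = 0 := Subtype.ext (sub_self _)
      rw [Pairing.ofBiadditive_apply, hself, ψ.map_zero_eq_one])
    (injective_pairing_omegaV hae h2 hψ) hsq (fun v ↦ congrArg ψ (diagV_frobV ha v))
  simp only [ψ.map_add_eq_mul]
  rw [hsum, sum_diagV_eq hae he hψ, neg_neg]

end DiagonalSum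

section PolarForm

variable {L : Type*} [Field L] {p e m : ℕ} [IsCharPow L p]

variable (p e) in
/-- The polar form `(x, y) ↦ x * R y + y * R x` of `x ↦ x * R x`. -/
def polarHom (a : ℕ → L) : L →+ L →+ L :=
  AddMonoidHom.mul.compl₂ (RgenHom p e a) + (AddMonoidHom.mul.compl₂ (RgenHom p e a)).flip

lemma polarHom_apply (a : ℕ → L) (x y : L) :
    polarHom p e a x y = x * Rgen p e a y + y * Rgen p e a x := rfl

lemma polarHom_comm (a : ℕ → L) (x y : L) : polarHom p e a x y = polarHom p e a y x := by
  rw [polarHom_apply, polarHom_apply, add_comm]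

lemma add_mul_Rgen_add (a : ℕ → L) (x y : L) :
    (x + y) * Rgen p e a (x + y) =
      x * Rgen p e a x + y * Rgen p e a y + polarHom p e a x y := by
  rw [Rgen_add, polarHom_apply]
  ring

lemma isQuadratic_addChar_mul_Rgen (χ : AddChar L ℂ) (a : ℕ → L) :
    (Pairing.ofBiadditive (polarHom p e a) χ).IsQuadratic fun x ↦ χ (x * Rgen p e a x) := by
  intro x y
  simp only [add_mul_Rgen_add, AddChar.map_add_eq_mul, Pairing.ofBiadditive_apply]

variable {K : Type*} [Field K] [IsAlgClosed K] [Algebra L K] [IsCharPow K p] [Finite L]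

lemma ker_pairing_polarHom (hL : Nat.card L = p ^ m) (a : ℕ → L)
    {ψ : AddChar (fixedField K p 1) ℂ} (hψ : ψ ≠ 0) :
    (Pairing.ofBiadditive (polarHom p e a) (traceChar hL ψ)).ker = (EgenHom p e a).ker := by
  ext y
  have hy (x : L) : Pairing.ofBiadditive (polarHom p e a) (traceChar hL ψ) y x =
      traceChar hL ψ (x ^ p ^ e * Egen p e a y) := by
    rw [Pairing.ofBiadditive_apply, polarHom_comm, polarHom_apply, traceChar_mul_Rgen_add]
  rw [AddMonoidHom.mem_ker, AddMonoidHom.mem_ker, EgenHom_apply]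
  refine ⟨fun h ↦ eq_zero_of_forall_mul_eq_one (traceChar_ne_zero hL hψ) fun z ↦ ?_, fun h ↦ ?_⟩
  · obtain ⟨x, rfl⟩ := Finite.surjective_of_injective (powHom L p e).injective z
    rw [mul_comm, powHom_apply, ← hy, h, AddChar.zero_apply]
  · ext x
    rw [hy, h, mul_zero, AddChar.map_zero_eq_one, AddChar.zero_apply]

/-- The kernel of `E` is the radical of the form `Tr (x * R y + y * R x)`, which is alternating in
characteristic two. -/
theorem isSquare_card_mul_card_ker_EgenHom [CharP L 2] (hL : Nat.card L = p ^ m) (a : ℕ → L) :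
    IsSquare (Nat.card L * Nat.card (EgenHom p e a).ker) := by
  have := IsCharPow.of_algebra p L (AlgebraicClosure L)
  obtain ⟨ψ, hψ⟩ := exists_addChar_ne_zero (fixedField (AlgebraicClosure L) p 1)
  rw [← ker_pairing_polarHom hL a hψ]
  refine Pairing.isSquare_card_mul_card_ker fun x ↦ ?_
  rw [Pairing.ofBiadditive_apply, polarHom_apply, CharTwo.add_self_eq_zero, AddChar.map_zero_eq_one]

end PolarForm

section KernelParity

variable {K : Type*} [Field K] [IsAlgClosed K] {p e s : ℕ} [IsCharPow K p] {a : ℕ → K}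

instance : IsCharPow (fixedField K p s) p := by
  obtain ⟨p₀, n, hp₀, _, hn, hp⟩ := IsCharPow.exists_prime_pow (A := K) (p := p)
  exact ⟨p₀, n, hp₀, inferInstance, hn, hp⟩

lemma card_ker_frobV (hs : 0 < s) (ha : ∀ i, a i ^ p ^ s = a i) :
    Nat.card (frobV ha : (EgenHom p e a).ker →+ _).ker =
      Nat.card (EgenHom p e
        fun i ↦ (⟨a i, mem_fixedField.2 (ha i)⟩ : fixedField K p s)).ker := by
  have hcard : Nat.card (fixedField K p s) = p ^ s := card_fixedField hs
  have hfin := finite_fixedField (K := K) (p := p) hs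
  have hker : (frobV ha : (EgenHom p e a).ker →+ _).ker =
      (((frobSub K p s).ker ⊓ (EgenHom p e a).ker).addSubgroupOf _) := by
    ext v
    simp [AddSubgroup.mem_addSubgroupOf, Subtype.ext_iff, coe_frobV]
  have hcomap : ((frobSub K p s).ker ⊓ (EgenHom p e a).ker).comap
      (algebraMap (fixedField K p s) K).toAddMonoidHom =
      (EgenHom p e fun i ↦ (⟨a i, mem_fixedField.2 (ha i)⟩ : fixedField K p s)).ker := by
    ext x
    have hE := map_Egen (algebraMap (fixedField K p s) K) p e
      (fun i ↦ ⟨a i, mem_fixedField.2 (ha i)⟩) x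
    have hx : (x : K) ∈ (frobSub K p s).ker := sub_eq_zero.2 x.2
    rw [AddMonoidHom.mem_ker, EgenHom_apply, ← map_eq_zero (algebraMap (fixedField K p s) K), hE]
    exact and_iff_right hx
  rw [hker, Nat.card_congr (AddSubgroup.addSubgroupOfEquivOfLe inf_le_right).toEquiv, ← hcomap]
  refine (card_comap_algebraMap hcard fun x hx ↦ ?_).symm
  exact sub_eq_zero.1 (AddSubgroup.mem_inf.1 hx).1

theorem not_isSquare_card_ker_frobV [CharP K 2] {f : ℕ} (hpf : p ^ s = 2 ^ f) (hf : Odd f)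
    (ha : ∀ i, a i ^ p ^ s = a i) :
    ¬IsSquare (Nat.card (frobV ha : (EgenHom p e a).ker →+ _).ker) := by
  intro hsq
  have hs : 0 < s := Nat.pos_of_ne_zero fun h ↦
    (Nat.one_lt_two_pow hf.pos.ne').ne (by rw [← hpf, h, pow_zero])
  have hcard : Nat.card (fixedField K p s) = p ^ s := card_fixedField hs
  have hfin := finite_fixedField (K := K) (p := p) hs
  have hmul := isSquare_card_mul_card_ker_EgenHom (e := e) hcard
    fun i ↦ ⟨a i, mem_fixedField.2 (ha i)⟩
  rw [card_ker_frobV hs] at hsq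
  rw [mul_comm, hcard.trans hpf] at hmul
  obtain ⟨k, rfl⟩ := hf
  have htwo := isSquare_of_isSquare_mul hsq Nat.card_pos.ne' hmul
  rw [pow_succ] at htwo
  exact Nat.prime_two.not_isSquare (isSquare_of_isSquare_mul ⟨2 ^ k, by ring⟩ (by positivity) htwo)

end KernelParity

lemma sum_comap_eq {G H : Type*} [AddCommGroup G] [Fintype G] [AddCommGroup H] (f : G →+ H)
    {V : AddSubgroup H} [Fintype V] [DecidablePred (· ∈ V.comap f)] (hV : V ≤ f.range)
    {g : G → ℂ} {F : V → ℂ} (hg : ∀ x (hx : f x ∈ V), g x = F ⟨f x, hx⟩) :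
    ∑ x with x ∈ V.comap f, g x = Nat.card f.ker * ∑ v, F v := by
  classical
  have hker : (f.addSubgroupComap V).ker = f.ker.addSubgroupOf (V.comap f) := by
    ext x
    exact Subtype.ext_iff
  have hle : f.ker ≤ V.comap f := fun x hx ↦ by
    rw [AddSubgroup.mem_comap, AddMonoidHom.mem_ker.1 hx]
    exact V.zero_mem
  have hrange : (f.addSubgroupComap V).range = ⊤ := AddMonoidHom.range_eq_top.2 fun v ↦ by
    obtain ⟨x, hx⟩ := hV v.2
    exact ⟨⟨x, by rw [AddSubgroup.mem_comap, hx]; exact v.2⟩, Subtype.ext hx⟩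
  have hsum := sum_comp_addMonoidHom (f.addSubgroupComap V) F
  rw [hker, Nat.card_congr (AddSubgroup.addSubgroupOfEquivOfLe hle).toEquiv] at hsum
  simp only [hrange, AddSubgroup.mem_top, filter_true] at hsum
  rw [← hsum, sum_subtype _ (p := (· ∈ V.comap f)) fun _ ↦ mem_filter_univ _]
  exact sum_congr rfl fun x _ ↦ hg x x.2

section CharacteristicTwo

variable {L K : Type*} [Field L] [Field K] [Algebra L K] {p e s t : ℕ}
  [IsCharPow K p] {a : ℕ → L}

variable (K p t) in
/-- The map `x ↦ x ^ p ^ t - x` from `L` to its extension `K`. -/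
def frobSubLift (L : Type*) [Field L] [Algebra L K] : L →+ K :=
  (frobSub K p t).comp (algebraMap L K).toAddMonoidHom

lemma frobSubLift_apply (x : L) : frobSubLift K p t L x = frobSub K p t (algebraMap L K x) := rfl

lemma frobSubLift_eq [IsCharPow L p] (x : L) :
    frobSubLift K p t L x = algebraMap L K (frobSub L p t x) := by
  simp [frobSubLift_apply]

lemma ker_frobSubLift [IsCharPow L p] :
    (frobSubLift K p t L).ker = (fixedField L p t).toAddSubgroup := by
  ext x
  rw [AddMonoidHom.mem_ker, frobSubLift_eq, map_eq_zero]
  exact sub_eq_zero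

lemma mem_comap_frobSubLift_iff [IsCharPow L p] (ha : ∀ i, a i ^ p ^ t = a i) {x : L} :
    x ∈ (EgenHom p e fun i ↦ algebraMap L K (a i)).ker.comap (frobSubLift K p t L) ↔
      Egen p e a x ^ p ^ t = Egen p e a x := by
  rw [AddSubgroup.mem_comap, AddMonoidHom.mem_ker, EgenHom_apply, frobSubLift_eq, ← map_Egen,
    map_eq_zero, frobSub_apply, Egen_sub, ← Egen_pow ha, sub_eq_zero]

variable [IsAlgClosed K] [CharP K 2]

section

variable [Finite L]

lemma perp_fixedField_eq [IsCharPow L p] (hL : Nat.card L = p ^ (2 * t))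
    (ha : ∀ i, a i ^ p ^ t = a i) {ψ : AddChar (fixedField K p 1) ℂ} (hψ : ψ ≠ 0) :
    (Pairing.ofBiadditive (polarHom p e a) (traceChar hL ψ)).perp
        (fixedField L p t).toAddSubgroup =
      (EgenHom p e fun i ↦ algebraMap L K (a i)).ker.comap (frobSubLift K p t L) := by
  have hβ (u x : L) : Pairing.ofBiadditive (polarHom p e a) (traceChar hL ψ) u x =
      traceChar hL ψ (u ^ p ^ e * Egen p e a x) := by
    rw [Pairing.ofBiadditive_apply, polarHom_apply, traceChar_mul_Rgen_add]
  have : CharP L 2 := (algebraMap L K).charP (algebraMap L K).injective 2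
  have hiter (w : L) : (w ^ p ^ t) ^ p ^ t = w := by
    have := Fintype.ofFinite L
    rw [← pow_pow_add, ← two_mul, ← hL, Nat.card_eq_fintype_card, FiniteField.pow_card]
  ext x
  rw [mem_comap_frobSubLift_iff ha]
  refine ⟨fun hx ↦ pow_eq_self_of_forall_mul_eq_one (traceChar_ne_zero hL hψ)
    (traceChar_pow_pow hL ψ t) fun z ↦ ?_, fun hx u hu ↦ ?_⟩
  · obtain ⟨w, rfl⟩ := Finite.surjective_of_injective (powHom L p e).injective z
    have hw : w ^ p ^ t - w ∈ fixedField L p t := by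
      rw [mem_fixedField, sub_pow_pow, hiter, CharTwo.sub_eq_add, CharTwo.sub_eq_add, add_comm]
    have hone := (hβ _ x).symm.trans (hx _ hw)
    rwa [sub_pow_pow, mul_comm (_ - _), pow_right_comm] at hone
  · rw [hβ]
    refine traceChar_eq_one_of_pow_eq_self hL ψ (mul_comm 2 t) (CharP.cast_eq_zero K 2) ?_
    rw [mul_pow, hx, pow_right_comm, mem_fixedField.1 hu]

variable (hL : Nat.card L = p ^ (2 * (s * 2))) (ha : ∀ i, a i ^ p ^ s = a i)
  {A : AddSubgroup K} (hA : IsRationalLagrangian p e s (fun i ↦ algebraMap L K (a i)) A)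
include hL ha hA

lemma ker_EgenHom_le_range_frobSubLift :
    (EgenHom p e fun i ↦ algebraMap L K (a i)).ker ≤ (frobSubLift K p (s * 2) L).range := by
  intro v hv
  have haK (i : ℕ) : algebraMap L K (a i) ^ p ^ s = algebraMap L K (a i) := by rw [← map_pow, ha]
  have hs : s * 2 ≠ 0 := by
    intro hs
    rw [hs, mul_zero, pow_zero] at hL
    exact (Finite.one_lt_card (α := L)).ne' hL
  obtain ⟨x, hx⟩ := exists_pow_sub_self_eq (Nat.one_lt_pow hs (IsCharPow.one_lt K p)) v
  obtain ⟨y, rfl⟩ := exists_algebraMap_eq hL (x := x) <| by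
    rw [two_mul, pow_pow_add, sub_eq_iff_eq_add.1 hx, add_pow_pow, hA.pow_mul_two_eq_self haK hv,
      sub_eq_iff_eq_add.1 hx, CharTwo.add_cancel_left]
  exact ⟨y, hx⟩

lemma absTrace_mul_Rgen_eq {x : L}
    (hx : frobSubLift K p (s * 2) L x ∈ (EgenHom p e fun i ↦ algebraMap L K (a i)).ker) :
    absTrace K hL (x * Rgen p e a x) = diagV p e _ ⟨_, hx⟩ +
      diagV p e _ (frobV (fun i ↦ by rw [← map_pow, ha]) ⟨_, hx⟩) := by
  obtain ⟨Y, hY⟩ := exists_pow_sub_self_eq (IsCharPow.one_lt K p)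
    (algebraMap L K (x * Rgen p e a x))
  refine Subtype.ext ((coe_absTrace_eq hL hY).trans ?_)
  rw [map_mul, map_Rgen] at hY
  rw [mul_comm 2]
  exact hA.pow_mul_two_mul_two_sub_eq (fun i ↦ by rw [← map_pow, ha]) hx hY

end

theorem sum_traceChar_mul_Rgen_eq_of_charTwo [Fintype L] [IsCharPow L p] {f : ℕ}
    (hL : Nat.card L = p ^ (2 * (s * 2))) (hpf : p ^ s = 2 ^ f) (hf : Odd f)
    (hae : a e ≠ 0) (he : 0 < e) (ha : ∀ i, a i ^ p ^ s = a i) {A : AddSubgroup K}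
    (hA : IsRationalLagrangian p e s (fun i ↦ algebraMap L K (a i)) A)
    {ψ : AddChar (fixedField K p 1) ℂ} (hψ : ψ ≠ 0) :
    ∑ x, traceChar hL ψ (x * Rgen p e a x) = p ^ e * p ^ (s * 2) := by
  classical
  have haK (i : ℕ) : algebraMap L K (a i) ^ p ^ s = algebraMap L K (a i) := by rw [← map_pow, ha]
  have haeK : algebraMap L K (a e) ≠ 0 := by simpa using hae
  have ha2 (i : ℕ) : a i ^ p ^ (s * 2) = a i := pow_pow_mul_eq_self (ha i) 2
  have hs : 0 < s := Nat.pos_of_ne_zero fun h ↦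
    (Nat.one_lt_two_pow hf.pos.ne').ne (by rw [← hpf, h, pow_zero])
  have := finite_ker_EgenHom (p := p) (e := e) (a := fun i ↦ algebraMap L K (a i)) haeK
    fun h ↦ absurd h he.ne'
  have := Fintype.ofFinite (EgenHom p e fun i ↦ algebraMap L K (a i)).ker
  have hU (x : L) (hx : x ∈ (fixedField L p (s * 2)).toAddSubgroup) :
      traceChar hL ψ (x * Rgen p e a x) = 1 := by
    refine traceChar_eq_one_of_pow_eq_self hL ψ (mul_comm 2 _) (CharP.cast_eq_zero K 2) ?_
    rw [mul_pow, Rgen_pow fun i _ ↦ ha2 i, mem_fixedField.1 hx]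
  rw [(isQuadratic_addChar_mul_Rgen _ a).sum_eq_sum_perp hU, perp_fixedField_eq hL ha2 hψ,
    sum_comap_eq _ (ker_EgenHom_le_range_frobSubLift hL ha hA)
      (F := fun v ↦ ψ (diagV p e _ v + diagV p e _ (frobV haK v)))
      fun x hx ↦ by rw [traceChar_apply, absTrace_mul_Rgen_eq hL ha hA hx],
    sum_diagV_add_diagV_frobV_eq hA haK haeK he (not_isSquare_card_ker_frobV hpf hf haK) hψ,
    ker_frobSubLift]
  have hcard := card_fixedField_of_dvd K hL (mul_pos hs two_pos) (dvd_mul_left _ _)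
  rw [mul_comm, ← Nat.cast_pow p (s * 2), ← hcard]
  rfl

end CharacteristicTwo

lemma pow_mod_four_eq_three {m n : ℕ} (hm : m % 4 = 3) (hn : Odd n) : m ^ n % 4 = 3 := by
  obtain ⟨k, rfl⟩ := hn
  rw [pow_succ, pow_mul, Nat.mul_mod, Nat.pow_mod, Nat.pow_mod m, hm]
  simp

section Counting

variable {L K : Type*} [Field L] [Fintype L] [Field K] [IsAlgClosed K] [Algebra L K]
  {p₀ p e s f : ℕ} [CharP L p₀] [IsCharPow L p] [IsCharPow K p] {a : ℕ → L} {A : AddSubgroup K}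

theorem sum_traceChar_mul_Rgen_eq_of_odd (hL : Nat.card L = p ^ (2 * (s * p₀)))
    (hp₀ : p₀.Prime) (hp₀mod : p₀ % 4 ≠ 1) (hpf : p ^ s = p₀ ^ f) (hf : Odd f)
    (hne : (p₀, e) ≠ (2, 0)) (hae : a e ≠ 0) (ha : ∀ i, a i ^ p ^ s = a i)
    (hA : IsRationalLagrangian p e s (fun i ↦ algebraMap L K (a i)) A)
    {ψ : AddChar (fixedField K p 1) ℂ} (hψ : ψ ≠ 0) :
    ∑ x, traceChar hL ψ (x * Rgen p e a x) = p ^ e * p ^ (s * p₀) := by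
  have : CharP K p₀ := charP_of_injective_algebraMap (algebraMap L K).injective p₀
  rcases hp₀.eq_two_or_odd' with rfl | hodd
  · have he : 0 < e := Nat.pos_of_ne_zero fun h ↦ hne (by rw [h])
    exact sum_traceChar_mul_Rgen_eq_of_charTwo hL hpf hf hae he ha hA hψ
  · have h2 : NeZero (2 : L) := ⟨Ring.two_ne_zero ((CharP.eq L ‹_› (ringChar.charP L)) ▸ by
      rintro rfl; exact absurd hodd (by decide))⟩
    have hmod : p ^ (s * p₀) % 4 = 3 := by
      rw [pow_mul, hpf, ← pow_mul]
      exact pow_mod_four_eq_three (by have := Nat.odd_iff.1 hodd; lia) (hf.mul hodd)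
    exact sum_traceChar_mul_Rgen_eq hL (CharP.cast_eq_zero K p₀) hmod hae ha hA.toIsLagrangian
      hA.pow_eq_self hψ

theorem card_curve_eq [DecidableEq L] (hL : Nat.card L = p ^ (2 * (s * p₀)))
    (hp₀ : p₀.Prime) (hp₀mod : p₀ % 4 ≠ 1) (hpf : p ^ s = p₀ ^ f) (hf : Odd f)
    (hne : (p₀, e) ≠ (2, 0)) (hae : a e ≠ 0) (ha : ∀ i, a i ^ p ^ s = a i)
    (hA : IsRationalLagrangian p e s (fun i ↦ algebraMap L K (a i)) A) :
    (#{z : L × L | z.2 ^ p - z.2 = z.1 * Rgen p e a z.1} : ℤ) =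
      p ^ (2 * (s * p₀)) + (p - 1) * (p ^ e * p ^ (s * p₀)) := by
  have hcount := card_artinSchreier_eq hL (fun x ↦ x * Rgen p e a x) fun ψ hψ ↦
    sum_traceChar_mul_Rgen_eq_of_odd hL hp₀ hp₀mod hpf hf hne hae ha hA hψ
  exact_mod_cast hcount

end Counting

/-- if moreover `f` is odd and `p₀ ≢ 1 (mod 4)`, then
`#{(x,y) ∈ F_{q^{2p₀}}² : y^p − y = x·R(x)} = q^{2p₀} + (p−1)p^e q^{p₀}`,
i.e. the Van der Geer–Van der Vlugt curve is `F_{q^{2p₀}}`-maximal. -/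
theorem statement18 {F K F' : Type*} [Field F] [Fintype F]
    [Field K] [IsAlgClosed K] [Algebra F K]
    [Field F'] [Fintype F'] [DecidableEq F'] [Algebra F F']
    (p₀ n p s q e f : ℕ) (hp₀ : p₀.Prime) [CharP F p₀] (hn : 0 < n) (hpn : p = p₀ ^ n)
    (hs : 0 < s) (hq : q = p ^ s) (hcard : Fintype.card F = q) (hf : q = p₀ ^ f)
    (a : ℕ → F) (hae : a e ≠ 0) (hne : (p₀, e) ≠ (2, 0))
    (hfodd : Odd f) (hp₀mod : p₀ % 4 ≠ 1)
    -- `A_R = S` is a maximal abelian subgroup of `H_R` contained in `F_q × F_q`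
    (S : Set (K × K))
    (hSsub : S ⊆ Hset p e (fun i => algebraMap F K (a i)))
    (hS0 : ((0 : K), (0 : K)) ∈ S)
    (hSmul : ∀ h ∈ S, ∀ h' ∈ S, Hmul p e (fun i => algebraMap F K (a i)) h h' ∈ S)
    (hSinv : ∀ h ∈ S, ∃ h' ∈ S, Hmul p e (fun i => algebraMap F K (a i)) h h' = (0, 0))
    (hScomm : ∀ h ∈ S, ∀ h' ∈ S, Hmul p e (fun i => algebraMap F K (a i)) h h' =
      Hmul p e (fun i => algebraMap F K (a i)) h' h)
    (hSmax : ∀ T : Set (K × K), T ⊆ Hset p e (fun i => algebraMap F K (a i)) →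
      ((0 : K), (0 : K)) ∈ T →
      (∀ h ∈ T, ∀ h' ∈ T, Hmul p e (fun i => algebraMap F K (a i)) h h' ∈ T) →
      (∀ h ∈ T, ∃ h' ∈ T, Hmul p e (fun i => algebraMap F K (a i)) h h' = (0, 0)) →
      (∀ h ∈ T, ∀ h' ∈ T, Hmul p e (fun i => algebraMap F K (a i)) h h' =
        Hmul p e (fun i => algebraMap F K (a i)) h' h) →
      S ⊆ T → T = S)
    (hSF : ∀ h ∈ S, (∃ x : F, algebraMap F K x = h.1) ∧ (∃ y : F, algebraMap F K y = h.2))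
    -- `F' = F_{q^{2p₀}}`
    (hcard' : Fintype.card F' = q ^ (2 * p₀)) :
    ((Finset.univ.filter fun z : F' × F' =>
        z.2 ^ p - z.2 = z.1 * Rgen p e (fun i => algebraMap F F' (a i)) z.1).card : ℤ) =
      (q : ℤ) ^ (2 * p₀) + ((p : ℤ) - 1) * (p : ℤ) ^ e * (q : ℤ) ^ p₀ := by
  have : IsCharPow F p := ⟨p₀, n, hp₀, ‹_›, hn, hpn⟩
  have := IsCharPow.of_algebra p F F'
  have := IsCharPow.of_algebra p F K
  have : CharP F' p₀ := charP_of_injective_algebraMap (algebraMap F F').injective p₀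
  let lift : F' →ₐ[F] K := IsAlgClosed.lift
  let : Algebra F' K := lift.toRingHom.toAlgebra
  have hlift : (fun i ↦ algebraMap F' K (algebraMap F F' (a i))) = fun i ↦ algebraMap F K (a i) :=
    funext fun i ↦ lift.commutes (a i)
  have hF (x : F) : x ^ p ^ s = x := by rw [← hq, ← hcard, FiniteField.pow_card]
  have hS : Maximal (IsAbelianSubgroup p e fun i ↦ algebraMap F' K (algebraMap F F' (a i))) S := by
    rw [hlift]
    exact ⟨⟨hSsub, hS0, hSmul, hSinv, hScomm⟩, fun T hT hST ↦
      (hSmax T hT.subset hT.zero_mem hT.mul_mem hT.exists_inv hT.comm hST).le⟩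
  have hA := isRationalLagrangian_fst_of_maximal (s := s) hS fun h hh ↦ by
    obtain ⟨⟨x, hx⟩, y, hy⟩ := hSF h hh
    rw [← hx, ← hy, ← map_pow, ← map_pow, hF, hF]
    exact ⟨rfl, rfl⟩
  have hL : Nat.card F' = p ^ (2 * (s * p₀)) := by
    rw [Nat.card_eq_fintype_card, hcard', hq, ← pow_mul, mul_left_comm]
  rw [card_curve_eq hL hp₀ hp₀mod (hq ▸ hf) hfodd hne (by simpa using hae)
    (fun i ↦ by rw [← map_pow, hF]) hA, hq]
  push_cast
  ring
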